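/- arXiv:2004.05929 — 4 statements merged into one kernel-verified Lean document; each statement's English description precedes it below -/
import Mathlib

section
/- Let γ be a tamely Liouville irrational number, with σ_γ(Q) ≤ C_γ (log Q)^{1/4 − ε₀} for all Q ≥ 2, for some ε₀ > 0 and C_γ > 0. Let 0 < ε₁ < 2ε₀ and C > 0, and let ψ be an approximation function satisfying ψ(q) ≤ C/q for all q ≥ 1, ψ(1) = ψ(2) = 0, and ψ(q) = 0 whenever Ω(q) > (log q)^{1/2 + ε₁}. Then there exist constants C′, C″ > 0 such that for all integers q ≥ 16: ∑_{1 ≤ q′ < q} (ψ(q)/q)·gcd(q′,q)·𝟙[‖γ(q − q′)/gcd(q,q′)‖ ≤ Δ(q,q′)/gcd(q,q′)] ≤ C′·ψ(q)·∑_{r | q} (log r)/r + C″·ψ(q). -/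
open MeasureTheory Filter Real

/-- Distance from a real number to the nearest integer. -/
noncomputable def dnint (x : ℝ) : ℝ := |x - round x|

/-- `Δ(q,q') = qψ(q') + q'ψ(q)`. -/
noncomputable def Δfun (ψ : ℕ → ℝ) (q q' : ℕ) : ℝ := q * ψ q' + q' * ψ q

/-- `σ_γ(Q)`: the infimum of all `σ > 0` with `‖qγ‖ ≥ q^{-σ}` for all `2 ≤ q ≤ Q`. -/
noncomputable def sigmaExp (γ : ℝ) (Q : ℕ) : ℝ :=
  sInf {σ : ℝ | 0 < σ ∧ ∀ q : ℕ, 2 ≤ q → q ≤ Q → (q : ℝ) ^ (-σ) ≤ dnint (q * γ)}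

lemma dnint_le (x : ℝ) (k : ℤ) : dnint x ≤ |x - k| := round_le x k

lemma dnint_pos {γ : ℝ} (hγ : Irrational γ) {n : ℕ} (hn : 1 ≤ n) : 0 < dnint (n * γ) := by
  unfold dnint
  rw [abs_pos, sub_ne_zero]
  have : Irrational ((n:ℝ) * γ) := hγ.natCast_mul (by omega)
  exact this.ne_int _

lemma spacing {γ : ℝ} {n : ℕ} {p : ℤ} (hn : 1 ≤ n) (hp : IsCoprime (n:ℤ) p)
    (h : |n * γ - p| ≤ 1 / n) {j : ℤ} (hj : 1 ≤ j) (hjn : 2 * j ≤ n) (k : ℤ) :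
    1 / (2 * (n:ℝ)) ≤ |γ * j - k| := by
  have hn0 : (0:ℝ) < n := by exact_mod_cast hn
  have hne : p * j - k * n ≠ 0 := by
    intro h0
    have h1 : (n:ℤ) ∣ p * j := ⟨k, by linarith⟩
    have h2 := hp.dvd_of_dvd_mul_left h1
    have := Int.le_of_dvd (by omega) h2
    omega
  have h1 : (1:ℝ) ≤ |(p:ℝ) * j - k * n| := by
    have := Int.one_le_abs hne
    exact_mod_cast this
  have hj0 : (0:ℝ) ≤ j := by exact_mod_cast (by omega : (0:ℤ) ≤ j)
  have hj2 : 2 * (j:ℝ) ≤ n := by exact_mod_cast hjn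
  have h2 : |(n * γ - p) * j| ≤ 1 / 2 := by
    rw [abs_mul, abs_of_nonneg hj0]
    calc |n * γ - p| * (j:ℝ) ≤ 1 / n * (n / 2) := by gcongr; linarith
      _ = 1/2 := by field_simp
  have h3 : |(p:ℝ) * j - k * n| ≤ |(n * γ - p) * j| + n * |γ * j - k| := by
    have e : (p:ℝ) * j - k * n = -((n * γ - p) * j) + n * (γ * j - k) := by ring
    rw [e]
    refine (abs_add_le _ _).trans ?_
    rw [abs_neg, abs_mul (n:ℝ), abs_of_pos hn0]
  rw [div_le_iff₀ (by positivity)]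
  nlinarith

lemma count {γ : ℝ} {n : ℕ} {p : ℤ} (hn : 1 ≤ n) (hp : IsCoprime (n:ℤ) p)
    (h : |n * γ - p| ≤ 1 / n) (r : ℝ) (x Len : ℕ) (δ : ℝ) (hδ : 0 ≤ δ) (A : Finset ℕ)
    (hA : ∀ s ∈ A, x ≤ s ∧ s < x + Len ∧ dnint (γ * (r - s)) ≤ δ) :
    (A.card : ℝ) ≤ (2 * Len / n + 1) * (4 * δ * n + 1) := by
  have hn0 : (0:ℝ) < n := by exact_mod_cast hn
  set f : ℕ → ℝ := fun s => γ * (r - s) - round (γ * (r - s)) with hf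
  have hfA : ∀ s ∈ A, |f s| ≤ δ := fun s hs => (hA s hs).2.2
  set J : ℕ := n / 2 + 1 with hJ
  have hcard : A.card ≤ ((Finset.range (Len / J + 1)) ×ˢ (Finset.range (⌊4 * δ * n⌋₊ + 1))).card := by
    apply Finset.card_le_card_of_injOn (fun s => ((s - x) / J, ⌊(f s + δ) * (2 * n)⌋₊))
    · intro s hs
      have hs' := hA s hs
      have h1 := abs_le.1 (hfA s hs)
      simp only [Finset.coe_product, Finset.coe_range, Set.mem_prod, Set.mem_Iio]
      refine ⟨Nat.lt_succ_of_le (Nat.div_le_div_right (by omega)), Nat.lt_succ_of_le (Nat.floor_le_floor ?_)⟩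
      nlinarith
    · have key : ∀ s ∈ A, ∀ t ∈ A, s < t → (s - x) / J = (t - x) / J →
          ⌊(f s + δ) * (2 * n)⌋₊ = ⌊(f t + δ) * (2 * n)⌋₊ → False := by
        intro s hs t ht hst e1 e2
        have hs' := hA s hs
        have ht' := hA t ht
        have h1 := abs_le.1 (hfA s hs)
        have h2 := abs_le.1 (hfA t ht)
        have hd : t - s ≤ n / 2 := by
          have := Nat.div_add_mod (s - x) J
          have h4 := Nat.div_add_mod (t - x) J
          have := Nat.mod_lt (t - x) (show 0 < J by omega)
          rw [← e1] at h4
          omega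
        have a0 : 0 ≤ (f s + δ) * (2 * n) := mul_nonneg (by linarith) (by positivity)
        have b0 : 0 ≤ (f t + δ) * (2 * n) := mul_nonneg (by linarith) (by positivity)
        have a1 := Nat.floor_le a0
        have a2 := Nat.lt_floor_add_one ((f s + δ) * (2 * n))
        have b1 := Nat.floor_le b0
        have b2 := Nat.lt_floor_add_one ((f t + δ) * (2 * n))
        rw [e2] at a1 a2
        have h5 : |f s - f t| < 1 / (2 * n) := by
          rw [lt_div_iff₀ (by positivity), ← abs_of_pos (show (0:ℝ) < 2 * n by positivity), ← abs_mul,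
            abs_lt]
          constructor <;> nlinarith
        have h6 := spacing hn hp h (j := (t:ℤ) - s) (by omega) (by omega)
          (round (γ * (r - s)) - round (γ * (r - t)))
        have e : f s - f t = γ * (((t:ℤ) - s : ℤ):ℝ) - ((round (γ * (r - s)) - round (γ * (r - t)) : ℤ) : ℝ) := by
          simp only [hf]; push_cast; ring
        rw [e] at h5
        linarith
      intro s hs t ht e
      simp only [Prod.mk.injEq] at e
      rcases lt_trichotomy s t with h' | h' | h'
      · exact (key s hs t ht h' e.1 e.2).elim
      · exact h'
      · exact (key t ht s hs h' e.1.symm e.2.symm).elim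
  rw [Finset.card_product, Finset.card_range, Finset.card_range] at hcard
  have hc : (A.card : ℝ) ≤ ((Len / J : ℕ) + 1) * ((⌊4 * δ * n⌋₊ : ℕ) + 1) := by exact_mod_cast hcard
  refine hc.trans ?_
  have g1 : ((Len / J : ℕ) : ℝ) ≤ 2 * Len / n := by
    refine Nat.cast_div_le.trans ?_
    have : (n:ℝ) ≤ 2 * J := by exact_mod_cast (by omega : n ≤ 2 * J)
    have hJ0 : (0:ℝ) < J := by positivity
    rw [div_le_div_iff₀ hJ0 hn0]
    nlinarith [(Nat.cast_nonneg Len : (0:ℝ) ≤ Len)]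
  have g2 : ((⌊4 * δ * n⌋₊ : ℕ) : ℝ) ≤ 4 * δ * n := Nat.floor_le (by positivity)
  gcongr

/-- tameness in usable form -/
def Tame (γ B a : ℝ) : Prop :=
  ∀ L : ℝ, 1 ≤ L → ∀ n : ℕ, 1 ≤ n → (n:ℝ) ≤ 2 ^ L → (2:ℝ) ^ (-(B * L ^ a)) ≤ dnint (n * γ)

lemma exists_denom {γ B a : ℝ} (hB : 1 ≤ B) (hT : Tame γ B a) {L : ℝ} (hL : 1 ≤ L) :
    ∃ n : ℕ, ∃ p : ℤ, 1 ≤ n ∧ IsCoprime (n:ℤ) p ∧ |n * γ - p| ≤ 1 / n ∧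
      (2:ℝ) ^ L < n ∧ (n:ℝ) ≤ 2 ^ (B * L ^ a) := by
  have hLa : 0 ≤ B * L ^ a := by positivity
  have h1 : (1:ℝ) ≤ 2 ^ (B * L ^ a) := Real.one_le_rpow (by norm_num) hLa
  set M := ⌊(2:ℝ) ^ (B * L ^ a)⌋₊ with hM
  have hM1 : 0 < M := Nat.floor_pos.2 h1
  obtain ⟨t, ht, htd⟩ := Real.exists_rat_abs_sub_le_and_den_le γ hM1
  have hd : (0:ℝ) < t.den := by exact_mod_cast t.den_pos
  have e : |(t.den:ℝ) * γ - t.num| ≤ 1 / (M + 1) := by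
    have e1 : (t.den:ℝ) * γ - t.num = t.den * (γ - t) := by
      have : (t:ℝ) = t.num / t.den := by exact_mod_cast (Rat.num_div_den t).symm
      rw [this]; field_simp
    rw [e1, abs_mul, abs_of_pos hd]
    calc (t.den:ℝ) * |γ - t| ≤ t.den * (1 / ((M + 1) * t.den)) := by gcongr
      _ = 1 / (M+1) := by field_simp
  have hdM : (t.den:ℝ) ≤ M := by exact_mod_cast htd
  refine ⟨t.den, t.num, t.den_pos, ?_, ?_, ?_, ?_⟩
  · rw [Int.isCoprime_iff_gcd_eq_one, Int.gcd_comm]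
    have := t.reduced
    simpa [Int.gcd, Nat.Coprime] using this
  · refine e.trans ?_
    gcongr; linarith
  · by_contra hcon
    push Not at hcon
    have h2 := hT L hL t.den t.den_pos hcon
    have h3 := dnint_le (t.den * γ) t.num
    have h4 := Nat.lt_floor_add_one ((2:ℝ) ^ (B * L ^ a))
    rw [← hM] at h4
    rw [Real.rpow_neg (by norm_num), ← one_div] at h2
    have : 1 / ((M:ℝ) + 1) < 1 / 2 ^ (B * L ^ a) := by gcongr
    linarith
  · exact hdM.trans (Nat.floor_le (by positivity))

lemma sig_nonempty {γ : ℝ} (hγ : Irrational γ) (Q : ℕ) :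
    {σ : ℝ | 0 < σ ∧ ∀ q : ℕ, 2 ≤ q → q ≤ Q → (q : ℝ) ^ (-σ) ≤ dnint (q * γ)}.Nonempty := by
  have h : ∀ᶠ σ : ℝ in atTop, ∀ q ∈ Finset.Icc 2 Q, (q : ℝ) ^ (-σ) ≤ dnint (q * γ) := by
    rw [Filter.eventually_all_finset]
    intro q hq
    rw [Finset.mem_Icc] at hq
    have h1 : (1:ℝ) < q := by exact_mod_cast (by omega : 1 < q)
    have h2 := (tendsto_rpow_atBot_of_base_gt_one (q:ℝ) h1).comp tendsto_neg_atTop_atBot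
    filter_upwards [h2.eventually_lt_const (dnint_pos hγ (n := q) (by omega))] with σ hσ
    exact hσ.le
  obtain ⟨σ, h1, h2⟩ := (h.and (eventually_gt_atTop 0)).exists
  exact ⟨σ, h2, fun q a b => h1 q (Finset.mem_Icc.2 ⟨a, b⟩)⟩

lemma not_large {γ : ℝ} (hγ : Irrational γ)
    (ε₀ Cγ : ℝ)
    (htame : ∀ Q : ℕ, 2 ≤ Q → sigmaExp γ Q ≤ Cγ * (Real.logb 2 Q) ^ ((1:ℝ)/4 - ε₀)) :
    ε₀ ≤ 1 / 4 := by
  by_contra hcon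
  push Not at hcon
  have lim : Tendsto (fun Q : ℕ => Cγ * (Real.logb 2 Q) ^ ((1:ℝ)/4 - ε₀)) atTop (nhds (Cγ * 0)) := by
    apply Tendsto.const_mul
    have h1 := tendsto_rpow_neg_atTop (show 0 < ε₀ - 1/4 by linarith)
    have h2 := (Real.tendsto_logb_atTop (b := 2) (by norm_num)).comp tendsto_natCast_atTop_atTop
    have := h1.comp h2
    refine this.congr fun x => ?_
    simp only [Function.comp]
    congr 1; ring
  rw [mul_zero] at lim
  have lim2 : Tendsto (fun Q : ℕ => 1 / ((Q:ℝ) + 1)) atTop (nhds 0) := tendsto_one_div_add_atTop_nhds_zero_nat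
  have hg := dnint_pos hγ (n := 1) le_rfl
  obtain ⟨Q, h1, h2, hQ⟩ := ((lim.eventually_lt_const (show (0:ℝ) < 1/2 by norm_num)).and
    ((lim2.eventually_lt_const hg).and (eventually_ge_atTop 2))).exists
  have hs := (htame Q hQ).trans_lt h1
  obtain ⟨n, hn0, hnQ, hn⟩ := Real.exists_nat_abs_mul_sub_round_le γ (show 0 < Q by omega)
  have hn : dnint (n * γ) ≤ 1 / (Q + 1) := hn
  rcases Nat.lt_or_ge n 2 with h | h
  · obtain rfl : n = 1 := by omega
    linarith
  · have hne := sig_nonempty hγ Q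
    obtain ⟨σ, hσ, hlt⟩ := exists_lt_of_csInf_lt hne hs
    have h3 := hσ.2 n h hnQ
    have hQ0 : (2:ℝ) ≤ Q := by exact_mod_cast hQ
    have h4 : ((Q:ℝ) + 1)⁻¹ < (n:ℝ) ^ (-σ) := by
      rw [Real.rpow_neg (by positivity)]
      apply inv_strictAnti₀ (by positivity)
      calc (n:ℝ) ^ σ ≤ (n:ℝ) ^ (1:ℝ) := Real.rpow_le_rpow_of_exponent_le (by exact_mod_cast (by omega : 1 ≤ n)) (by linarith)
        _ = n := by simp
        _ < Q + 1 := by have : (n:ℝ) ≤ Q := by exact_mod_cast hnQ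
                        linarith
    rw [one_div] at hn
    linarith

lemma card_div_le {q : ℕ} (hq : q ≠ 0) : q.divisors.card ≤ 2 ^ q.primeFactorsList.length := by
  induction q using Nat.recOnMul with
  | zero => simp at hq
  | one => simp
  | prime p hp => rw [hp.divisors, Nat.primeFactorsList_prime hp]; exact Finset.card_le_two
  | mul a b iha ihb =>
    have ha : a ≠ 0 := by rintro rfl; simp at hq
    have hb : b ≠ 0 := by rintro rfl; simp at hq
    rw [(Nat.perm_primeFactorsList_mul ha hb).length_eq, List.length_append, pow_add, Nat.divisors_mul]
    exact Finset.card_mul_le.trans (Nat.mul_le_mul (iha ha) (ihb hb))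

lemma exists_tame {γ : ℝ} (hγ : Irrational γ)
    (ε₀ Cγ : ℝ) (hε : ε₀ ≤ 1 / 4) (hCγ : 0 < Cγ)
    (htame : ∀ Q : ℕ, 2 ≤ Q → sigmaExp γ Q ≤ Cγ * (Real.logb 2 Q) ^ ((1:ℝ)/4 - ε₀)) :
    ∃ B : ℝ, 1 ≤ B ∧ Tame γ B (5 / 4 - ε₀) := by
  have hg := dnint_pos hγ (n := 1) le_rfl
  set B := max (Cγ + 1) (-Real.logb 2 (dnint ((1:ℕ) * γ))) with hBdef
  have hB1 : Cγ + 1 ≤ B := le_max_left _ _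
  have hB2 : -Real.logb 2 (dnint ((1:ℕ) * γ)) ≤ B := le_max_right _ _
  refine ⟨B, by linarith, ?_⟩
  intro L hL n hn hnL
  have hL0 : 0 < L := by linarith
  rcases Nat.lt_or_ge n 2 with h | h
  · obtain rfl : n = 1 := by omega
    have h1 : 1 ≤ L ^ (5 / 4 - ε₀) := Real.one_le_rpow hL (by linarith)
    rw [← Real.le_logb_iff_rpow_le (by norm_num) hg]
    have hBn : B ≤ B * L ^ (5 / 4 - ε₀) := le_mul_of_one_le_right (by linarith) h1
    exact (neg_le_neg hBn).trans (neg_le.1 hB2)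
  · have hn0 : (0:ℝ) < n := by positivity
    have hlog1 : 1 ≤ Real.logb 2 n := by
      rw [Real.le_logb_iff_rpow_le (by norm_num) hn0]
      simpa using (by exact_mod_cast h : (2:ℝ) ≤ n)
    have hlogL : Real.logb 2 n ≤ L := by
      rw [Real.logb_le_iff_le_rpow (by norm_num) hn0]; exact hnL
    have hth : (0:ℝ) ≤ 1/4 - ε₀ := by linarith
    have hs : sigmaExp γ n < B * L ^ ((1:ℝ)/4 - ε₀) := by
      have h1 : (0:ℝ) < (Real.logb 2 n) ^ ((1:ℝ)/4 - ε₀) := by positivity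
      have h2 : (Real.logb 2 n) ^ ((1:ℝ)/4 - ε₀) ≤ L ^ ((1:ℝ)/4 - ε₀) := by gcongr
      have := htame n h
      nlinarith
    obtain ⟨σ, hσ, hlt⟩ := exists_lt_of_csInf_lt (sig_nonempty hγ n) hs
    refine le_trans ?_ (hσ.2 n h le_rfl)
    have e : L ^ (5 / 4 - ε₀) = L ^ ((1:ℝ)/4 - ε₀) * L := by
      rw [← Real.rpow_add_one hL0.ne']; congr 1; ring
    have hσ0 := hσ.1
    have : (n:ℝ) ^ (-σ) = 2 ^ (-(Real.logb 2 n * σ)) := by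
      rw [← mul_neg, Real.rpow_mul (by norm_num), Real.rpow_logb (by norm_num) (by norm_num) hn0]
    rw [this]
    apply Real.rpow_le_rpow_of_exponent_le (by norm_num)
    rw [e, neg_le_neg_iff]
    nlinarith

/-- the counted set -/
noncomputable def Gset (γ C : ℝ) (d r : ℕ) : Finset ℕ :=
  open Classical in
  (Finset.Ico 1 r).filter (fun s : ℕ => dnint (γ * ((r:ℝ) - s)) ≤ 2 * C * r / (d * s))

lemma mem_Gset {γ C : ℝ} {d r s : ℕ} :
    s ∈ Gset γ C d r ↔ (1 ≤ s ∧ s < r) ∧ dnint (γ * ((r:ℝ) - s)) ≤ 2 * C * r / (d * s) := by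
  simp [Gset]

lemma caseA {γ B a C : ℝ} (hB : 1 ≤ B) (hT : Tame γ B a) (hC : 0 < C) {d r : ℕ}
    (hd : 2 ≤ d) (hr : 1 ≤ r)
    (hcond : B * (Real.logb 2 d) ^ a + 2 * Real.logb 2 d ≤ Real.logb 2 ((d * r : ℕ) : ℝ)) :
    ((Gset γ C d r).card : ℝ) ≤ (192 * C + 25) * (r / d) * Real.logb 2 d := by
  have hd0 : (0:ℝ) < d := by positivity
  have hr0 : (0:ℝ) < r := by exact_mod_cast hr
  have hlog1 : 1 ≤ Real.logb 2 d := by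
    rw [Real.le_logb_iff_rpow_le (by norm_num) hd0]
    simpa using (by exact_mod_cast hd : (2:ℝ) ≤ d)
  obtain ⟨n, p, hn, hp, hap, hn1, hn2⟩ := exists_denom hB hT hlog1
  rw [Real.rpow_logb (by norm_num) (by norm_num) hd0] at hn1
  have hn0 : (0:ℝ) < n := by exact_mod_cast hn
  have hnd : (n:ℝ) * d ≤ r := by
    have h1 : (n:ℝ) * d ^ 2 ≤ d * r := by
      have : (2:ℝ) ^ (B * (Real.logb 2 d) ^ a + 2 * Real.logb 2 d) ≤ 2 ^ Real.logb 2 ((d * r : ℕ) : ℝ) :=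
        Real.rpow_le_rpow_of_exponent_le (by norm_num) hcond
      rw [Real.rpow_logb (by norm_num) (by norm_num) (by positivity), Real.rpow_add (by norm_num),
        mul_comm (2:ℝ) (Real.logb 2 d), Real.rpow_mul (by norm_num) (Real.logb 2 d),
        Real.rpow_logb (by norm_num) (by norm_num) hd0] at this
      push_cast at this
      rw [Real.rpow_two] at this
      refine le_trans ?_ this
      gcongr
    nlinarith
  have hndN : n * d ≤ r := by exact_mod_cast hnd
  set T := r / d with hTdef
  have hT1 : n ≤ T := (Nat.le_div_iff_mul_le (by omega)).2 hndN
  have hT1' : (n:ℝ) ≤ T := by exact_mod_cast hT1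
  have hTle : (T:ℝ) ≤ r / d := Nat.cast_div_le
  have hT0 : (0:ℝ) < T := by linarith
  have hT2 : (r:ℝ) ≤ 2 * d * T := by
    have : r < d * (T + 1) := by
      rw [hTdef]; exact Nat.lt_mul_div_succ r (by omega)
    have h2 : d * (T + 1) ≤ 2 * d * T := by nlinarith
    exact_mod_cast this.le.trans h2
  set A : ℕ → Finset ℕ := fun j => (Gset γ C d r).filter (fun s => 2 ^ j * T ≤ s ∧ s < 2 ^ j * T + 2 ^ j * T) with hAdef
  set J := Nat.log 2 d + 2 with hJ
  have hsub : Gset γ C d r ⊆ Finset.range T ∪ (Finset.range J).biUnion A := by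
    intro s hs
    have hs' := mem_Gset.1 hs
    rw [Finset.mem_union, Finset.mem_range, Finset.mem_biUnion]
    rcases Nat.lt_or_ge s T with h | h
    · exact Or.inl h
    right
    have hTpos : 0 < T := by omega
    have hdiv : s / T ≠ 0 := by
      have := Nat.div_pos h hTpos
      omega
    have p1 := Nat.pow_log_le_self 2 hdiv
    have p2 := Nat.lt_pow_succ_log_self (b := 2) (by norm_num) (s / T)
    refine ⟨Nat.log 2 (s / T), ?_, ?_⟩
    · rw [Finset.mem_range, hJ]
      have h1 : s / T ≤ 2 * d := by
        apply Nat.div_le_of_le_mul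
        have : r ≤ 2 * d * T := by exact_mod_cast hT2
        nlinarith [hs'.1.2]
      have h2 := Nat.log_mono_right (b := 2) h1
      rw [mul_comm, Nat.log_mul_base (by norm_num) (by omega)] at h2
      omega
    · rw [hAdef, Finset.mem_filter]
      refine ⟨hs, ?_, ?_⟩
      · exact (Nat.le_div_iff_mul_le hTpos).1 p1
      · rw [Nat.div_lt_iff_lt_mul hTpos, pow_succ] at p2
        nlinarith
  have hAj : ∀ j ∈ Finset.range J, ((A j).card : ℝ) ≤ (64 * C + 8) * (r / d) := by
    intro j hj
    rw [Finset.mem_range, hJ] at hj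
    have hj2 : (2:ℝ) ^ j ≤ 2 * d := by
      have h1 : 2 ^ j ≤ 2 ^ (Nat.log 2 d + 1) := Nat.pow_le_pow_right (by norm_num) (by omega)
      have h2 := Nat.pow_log_le_self 2 (show d ≠ 0 by omega)
      rw [pow_succ] at h1
      exact_mod_cast (by omega : 2 ^ j ≤ 2 * d)
    have h2j : (0:ℝ) < 2 ^ j := by positivity
    have hc := count hn hp hap (r:ℝ) (2 ^ j * T) (2 ^ j * T) (4 * C / 2 ^ j) (by positivity) (A j) (by
      intro s hs
      rw [hAdef, Finset.mem_filter] at hs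
      refine ⟨hs.2.1, hs.2.2, (mem_Gset.1 hs.1).2.trans ?_⟩
      have hsT : (2:ℝ) ^ j * T ≤ s := by exact_mod_cast hs.2.1
      have hs0 : (0:ℝ) < s := lt_of_lt_of_le (by positivity) hsT
      rw [div_le_div_iff₀ (by positivity) h2j]
      calc 2 * C * r * 2 ^ j ≤ 2 * C * (2 * d * T) * 2 ^ j := by gcongr
        _ = 4 * C * (d * (2 ^ j * T)) := by ring
        _ ≤ 4 * C * (d * s) := by gcongr)
    refine hc.trans ?_
    push_cast
    have f1 : 4 * (4 * C / 2 ^ j) * (n:ℝ) + 1 ≤ (16 * C + 2) * (n / 2 ^ j) := by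
      have : 1 ≤ 2 * ((n:ℝ) / 2 ^ j) := by
        rw [← mul_div_assoc, le_div_iff₀ h2j]; linarith
      have e : 4 * (4 * C / 2 ^ j) * (n:ℝ) = 16 * C * (n / 2 ^ j) := by ring
      rw [e]; linarith
    have f2 : (n:ℝ) / 2 ^ j ≤ n := div_le_self hn0.le (one_le_pow₀ (by norm_num))
    calc (2 * (2 ^ j * (T:ℝ)) / n + 1) * (4 * (4 * C / 2 ^ j) * n + 1)
        ≤ (2 * (2 ^ j * (T:ℝ)) / n + 1) * ((16 * C + 2) * (n / 2 ^ j)) := by gcongr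
      _ = (16 * C + 2) * (2 * T + n / 2 ^ j) := by field_simp
      _ ≤ (16 * C + 2) * (2 * T + 2 * T) := by gcongr; linarith
      _ = (64 * C + 8) * T := by ring
      _ ≤ _ := by gcongr
  have hcard : ((Gset γ C d r).card : ℝ) ≤ T + ∑ j ∈ Finset.range J, ((A j).card : ℝ) := by
    have h1 := (Finset.card_le_card hsub).trans (Finset.card_union_le _ _)
    have h2 := Finset.card_biUnion_le (s := Finset.range J) (t := A)
    rw [Finset.card_range] at h1
    exact_mod_cast h1.trans (Nat.add_le_add_left h2 T)
  have hsum := Finset.sum_le_sum hAj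
  rw [Finset.sum_const, Finset.card_range, nsmul_eq_mul] at hsum
  have hJle : (J:ℝ) ≤ 3 * Real.logb 2 d := by
    have : ((Nat.log 2 d : ℕ):ℝ) ≤ Real.logb 2 d := Real.natLog_le_logb d 2
    rw [hJ]; push_cast; linarith
  have hrd : (0:ℝ) < r / d := by positivity
  calc ((Gset γ C d r).card : ℝ) ≤ T + J * ((64 * C + 8) * (r / d)) := by linarith
    _ ≤ r / d * Real.logb 2 d + 3 * Real.logb 2 d * ((64 * C + 8) * (r / d)) := by
        gcongr
        nlinarith
    _ = _ := by ring

lemma caseB {γ B a C : ℝ} (hB : 1 ≤ B) (ha : 0 ≤ a) (hT : Tame γ B a) (hC : 0 < C) {d r : ℕ}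
    (hd : 1 ≤ d) (hr : 1 ≤ r) {L : ℝ} (hL : 1 ≤ L) (hLd : (2:ℝ) ^ (2 * L) ≤ d)
    (hcond : Real.logb 2 (2 * C) + 2 * (B * L ^ a) + B * (B * L ^ a) ^ a
      < Real.logb 2 ((d * r : ℕ) : ℝ)) :
    ((Gset γ C d r).card : ℝ) ≤ (24 * C + 4) * r * (2:ℝ) ^ (-L) := by
  have hd0 : (0:ℝ) < d := by positivity
  have hr0 : (0:ℝ) < r := by exact_mod_cast hr
  obtain ⟨n, p, hn, hp, hap, hn1, hn2⟩ := exists_denom hB hT hL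
  have hn0 : (0:ℝ) < n := by exact_mod_cast hn
  have h2L : (0:ℝ) < 2 ^ L := by positivity
  have hLa : 1 ≤ L ^ a := Real.one_le_rpow hL ha
  rcases Nat.lt_or_ge r n with hrn | hrn
  · have : Gset γ C d r = ∅ := by
      rw [Finset.eq_empty_iff_forall_notMem]
      intro s hs
      obtain ⟨⟨h1, h2⟩, h3⟩ := mem_Gset.1 hs
      have hrle : (r:ℝ) ≤ 2 ^ (B * L ^ a) := le_trans (by exact_mod_cast hrn.le) hn2
      have hsr : ((r - s : ℕ):ℝ) ≤ r := by exact_mod_cast Nat.sub_le r s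
      have h4 := hT (B * L ^ a) (by nlinarith) (r - s) (by omega) (hsr.trans hrle)
      rw [Nat.cast_sub h2.le, mul_comm _ γ] at h4
      have hs1 : (1:ℝ) ≤ s := by exact_mod_cast h1
      have h5 : 2 * C * r / (d * s) ≤ 2 * C * r / d := by
        gcongr; nlinarith
      have h6 := (h4.trans h3).trans h5
      rw [le_div_iff₀ hd0] at h6
      have h7 : (2:ℝ) ^ (-(B * (B * L ^ a) ^ a)) * (d * r) ≤ 2 * C * (2 ^ (B * L ^ a) * 2 ^ (B * L ^ a)) := by
        calc (2:ℝ) ^ (-(B * (B * L ^ a) ^ a)) * (d * r) = (2:ℝ) ^ (-(B * (B * L ^ a) ^ a)) * d * r := by ring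
          _ ≤ 2 * C * r * r := by gcongr
          _ = 2 * C * (r * r) := by ring
          _ ≤ _ := by gcongr
      have h8 : (2:ℝ) ^ (Real.logb 2 (2 * C) + 2 * (B * L ^ a) + B * (B * L ^ a) ^ a) < d * r := by
        rw [← Real.lt_logb_iff_rpow_lt (by norm_num) (by positivity)]
        exact_mod_cast hcond
      rw [Real.rpow_add (by norm_num), Real.rpow_add (by norm_num),
        Real.rpow_logb (by norm_num) (by norm_num) (by positivity), two_mul (B * L ^ a),
        Real.rpow_add (by norm_num)] at h8
      rw [Real.rpow_neg (by norm_num), inv_mul_le_iff₀ (by positivity)] at h7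
      linarith
    rw [this]; simp; positivity
  · set A := (Gset γ C d r).filter (fun s : ℕ => (r:ℝ) / 2 ^ L < (s:ℝ)) with hA
    have hsub : Gset γ C d r ⊆ Finset.Icc 1 ⌊(r:ℝ) / 2 ^ L⌋₊ ∪ A := by
      intro s hs
      have hs' := mem_Gset.1 hs
      rw [Finset.mem_union, Finset.mem_Icc, hA, Finset.mem_filter]
      rcases le_or_gt (s:ℝ) (r / 2 ^ L) with h | h
      · exact Or.inl ⟨hs'.1.1, Nat.le_floor h⟩
      · exact Or.inr ⟨hs, h⟩
    have hLneg : (2:ℝ) ^ (-L) = 1 / 2 ^ L := by rw [Real.rpow_neg (by norm_num), one_div]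
    have hd2 : (2:ℝ) ^ L * 2 ^ L ≤ d := by
      rw [← Real.rpow_add (by norm_num), ← two_mul]; exact hLd
    have hc := count hn hp hap (r:ℝ) 0 r (2 * C * (1 / 2 ^ L)) (by positivity) A (by
      intro s hs
      rw [hA, Finset.mem_filter] at hs
      obtain ⟨⟨h1, h2⟩, h3⟩ := mem_Gset.1 hs.1
      refine ⟨by omega, by omega, h3.trans ?_⟩
      have hs0 : (0:ℝ) < s := by exact_mod_cast h1
      have h4 := hs.2
      rw [div_lt_iff₀ h2L] at h4
      rw [mul_one_div, div_le_div_iff₀ (by positivity) h2L]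
      calc 2 * C * r * 2 ^ L ≤ 2 * C * (s * 2 ^ L) * 2 ^ L := by gcongr
        _ = 2 * C * ((2 ^ L * 2 ^ L) * s) := by ring
        _ ≤ _ := by gcongr)
    have hcard : ((Gset γ C d r).card : ℝ) ≤ r / 2 ^ L + A.card := by
      have h1 := (Finset.card_le_card hsub).trans (Finset.card_union_le _ _)
      rw [Nat.card_Icc, Nat.add_sub_cancel] at h1
      have h2 : ((Gset γ C d r).card : ℝ) ≤ (⌊(r:ℝ) / 2 ^ L⌋₊ : ℕ) + A.card := by exact_mod_cast h1
      have := Nat.floor_le (show 0 ≤ (r:ℝ) / 2 ^ L by positivity)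
      linarith
    have hrn' : (n:ℝ) ≤ r := by exact_mod_cast hrn
    rw [hLneg]
    have g1 : 2 * (r:ℝ) / n + 1 ≤ 3 * r / n := by
      rw [div_add_one hn0.ne']; gcongr; linarith
    have g2 : 1 / (n:ℝ) ≤ 1 / 2 ^ L := by gcongr
    calc ((Gset γ C d r).card : ℝ) ≤ r / 2 ^ L + (3 * r / n) * (4 * (2 * C * (1 / 2 ^ L)) * n + 1) := by
          refine hcard.trans ?_
          gcongr
          refine hc.trans ?_
          gcongr
      _ = r / 2 ^ L + r * (24 * C * (1 / 2 ^ L)) + 3 * r * (1 / n) := by field_simp; ring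
      _ ≤ r / 2 ^ L + r * (24 * C * (1 / 2 ^ L)) + 3 * r * (1 / 2 ^ L) := by gcongr
      _ = _ := by ring

lemma ev_small (c K : ℝ) (hc : c < 1) : ∀ᶠ ℓ : ℝ in atTop, K * ℓ ^ c ≤ ℓ / 4 := by
  have h1 := (tendsto_rpow_neg_atTop (show 0 < 1 - c by linarith)).const_mul K
  rw [mul_zero] at h1
  filter_upwards [h1.eventually_lt_const (show (0:ℝ) < 1/4 by norm_num), eventually_gt_atTop 0] with ℓ h hℓ
  have e : ℓ ^ c = ℓ ^ (-(1 - c)) * ℓ := by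
    rw [← Real.rpow_add_one hℓ.ne']; congr 1; ring
  rw [e]
  nlinarith

lemma ev_conds {a b B D : ℝ} (ha : 1 ≤ a) (hb : 0 < b) (hab : a * a * b < 1) (hB : 1 ≤ B) :
    ∀ᶠ ℓ : ℝ in atTop, B * (2 * ℓ ^ b) ^ a + 2 * (2 * ℓ ^ b) ≤ ℓ ∧
      D + 2 * (B * (ℓ ^ b) ^ a) + B * (B * (ℓ ^ b) ^ a) ^ a < ℓ := by
  have h1 : a * b < 1 := by nlinarith
  have h2 : b < 1 := by nlinarith
  filter_upwards [ev_small (b * a) (B * 2 ^ a) (by linarith), ev_small b 4 h2,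
    ev_small (b * a) (2 * B) (by linarith), ev_small (b * a * a) (B * B ^ a) (by nlinarith),
    eventually_gt_atTop 0, eventually_gt_atTop (4 * D)] with ℓ e1 e2 e3 e4 e5 e6
  have p : (0:ℝ) ≤ ℓ ^ b := by positivity
  rw [Real.mul_rpow (by norm_num) p, Real.mul_rpow (by linarith) (by positivity),
    ← Real.rpow_mul e5.le, ← Real.rpow_mul e5.le]
  constructor <;> nlinarith

lemma fiber_card {γ C : ℝ} (hC : 0 < C) {ψ : ℕ → ℝ}
    (hub : ∀ q : ℕ, 1 ≤ q → ψ q ≤ C / (q : ℝ)) {d r : ℕ} (hd : 1 ≤ d) (A : Finset ℕ)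
    (hA : ∀ q' ∈ A, (1 ≤ q' ∧ q' < d * r) ∧ Nat.gcd q' (d * r) = d ∧
      dnint (γ * (((d * r : ℕ) : ℝ) - q') / (Nat.gcd (d * r) q' : ℝ))
            ≤ Δfun ψ (d * r) q' / (Nat.gcd (d * r) q' : ℝ)) :
    A.card ≤ (Gset γ C d r).card := by
  have hd0 : (0:ℝ) < d := by exact_mod_cast hd
  have hdvd : ∀ q' ∈ A, d ∣ q' := by
    intro q' h
    have := Nat.gcd_dvd_left q' (d * r)
    rwa [(hA q' h).2.1] at this
  apply Finset.card_le_card_of_injOn (fun q' => q' / d)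
  · intro q' hq'
    obtain ⟨s, rfl⟩ := hdvd q' hq'
    obtain ⟨⟨h1, h2⟩, h3, h4⟩ := hA _ hq'
    have hs : 1 ≤ s := by
      rcases Nat.eq_zero_or_pos s with h | h
      · subst h; simp at h1
      · exact h
    have hsr : s < r := Nat.lt_of_mul_lt_mul_left h2
    have hs0 : (0:ℝ) < s := by exact_mod_cast hs
    have hr0 : (0:ℝ) < r := by exact_mod_cast (by omega : 0 < r)
    have hsr' : (s:ℝ) < r := by exact_mod_cast hsr
    rw [Nat.gcd_comm, h3] at h4
    simp only [Nat.mul_div_cancel_left s (show 0 < d by omega)]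
    rw [Finset.mem_coe, mem_Gset]
    refine ⟨⟨hs, hsr⟩, ?_⟩
    have e : γ * (((d * r : ℕ) : ℝ) - (d * s : ℕ)) / d = γ * ((r:ℝ) - s) := by
      push_cast; field_simp
    rw [e] at h4
    refine h4.trans ?_
    have b1 := hub (d * r) (Nat.mul_pos hd (by omega))
    have b2 := hub (d * s) (Nat.mul_pos hd hs)
    have : Δfun ψ (d * r) (d * s) ≤ 2 * C * r / s := by
      unfold Δfun
      calc ((d * r : ℕ):ℝ) * ψ (d * s) + ((d * s : ℕ):ℝ) * ψ (d * r)
          ≤ ((d * r : ℕ):ℝ) * (C / ((d * s : ℕ):ℝ)) + ((d * s : ℕ):ℝ) * (C / ((d * r : ℕ):ℝ)) := by gcongr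
        _ = C * (r / s) + C * (s / r) := by push_cast; field_simp
        _ ≤ C * (r / s) + C * (r / s) := by
            have : (s:ℝ) / r ≤ r / s := by
              rw [div_le_div_iff₀ hr0 hs0]; nlinarith
            gcongr
        _ = _ := by ring
    calc Δfun ψ (d * r) (d * s) / d ≤ (2 * C * r / s) / d := by gcongr
      _ = _ := by rw [div_div, mul_comm (s:ℝ)]
  · intro x hx y hy e
    exact (Nat.div_left_inj (hdvd x hx) (hdvd y hy)).1 e

open Classical in
theorem stmt10 (γ : ℝ) (hγ : Irrational γ)
    (ε₀ Cγ : ℝ) (hε₀ : 0 < ε₀) (hCγ : 0 < Cγ)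
    (htame : ∀ Q : ℕ, 2 ≤ Q → sigmaExp γ Q ≤ Cγ * (Real.logb 2 Q) ^ ((1:ℝ)/4 - ε₀))
    (ε₁ : ℝ) (hε₁ : 0 < ε₁) (hε₁' : ε₁ < 2 * ε₀)
    (C : ℝ) (hC : 0 < C)
    (ψ : ℕ → ℝ) (hψ0 : ∀ q, 0 ≤ ψ q)
    (hub : ∀ q : ℕ, 1 ≤ q → ψ q ≤ C / (q : ℝ))
    (hψ1 : ψ 1 = 0) (hψ2 : ψ 2 = 0)
    (hΩ : ∀ q : ℕ, 1 ≤ q →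
      ((q.primeFactorsList.length : ℝ) > (Real.logb 2 q) ^ ((1:ℝ)/2 + ε₁) → ψ q = 0)) :
    ∃ C' > (0:ℝ), ∃ C'' > (0:ℝ), ∀ q : ℕ, 16 ≤ q →
      ∑ q' ∈ Finset.Ico 1 q, (ψ q / q) * (Nat.gcd q' q : ℝ) *
        (if dnint (γ * ((q : ℝ) - q') / (Nat.gcd q q' : ℝ))
            ≤ Δfun ψ q q' / (Nat.gcd q q' : ℝ) then 1 else 0)
      ≤ C' * ψ q * (∑ r ∈ q.divisors, Real.logb 2 r / r)
        + C'' * ψ q := by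
  have hε := not_large hγ ε₀ Cγ htame
  obtain ⟨B, hB, hT⟩ := exists_tame hγ ε₀ Cγ hε hCγ htame
  set a := 5 / 4 - ε₀ with ha
  set b := (1:ℝ) / 2 + ε₁ with hb
  have ha1 : 1 ≤ a := by linarith
  have hab : a * a * b < 1 := by
    have h1 : b < 3 - 2 * a := by linarith
    have h3 : a * a * b < a * a * (3 - 2 * a) := by gcongr
    have h4 : a * a * (3 - 2 * a) ≤ 1 := by nlinarith [sq_nonneg (a - 1)]
    linarith
  have hev := (ev_conds (D := Real.logb 2 (2 * C)) ha1 (show 0 < b by linarith) hab hB)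
  have hlim := (Real.tendsto_logb_atTop (b := 2) (by norm_num)).comp (tendsto_natCast_atTop_atTop (R := ℝ))
  obtain ⟨q₀, hq₀⟩ := Filter.eventually_atTop.1 (hlim.eventually hev)
  refine ⟨192 * C + 25, by positivity, q₀ + 1 + (24 * C + 4), by positivity, ?_⟩
  intro q hq
  have hqr : (0:ℝ) < q := by exact_mod_cast (by omega : 0 < q)
  have hψ := hψ0 q
  have hlognn : ∀ r ∈ q.divisors, 0 ≤ Real.logb 2 r / (r:ℝ) := by
    intro r hr
    have : (1:ℝ) ≤ r := by exact_mod_cast Nat.pos_of_mem_divisors hr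
    have := Real.logb_nonneg (b := 2) (by norm_num) this
    positivity
  have hsumnn := Finset.sum_nonneg hlognn
  rcases Nat.lt_or_ge q q₀ with hlt | hge
  · -- small q
    have hterm : ∀ q' ∈ Finset.Ico 1 q, (ψ q / q) * (Nat.gcd q' q : ℝ) *
        (if dnint (γ * ((q : ℝ) - q') / (Nat.gcd q q' : ℝ))
            ≤ Δfun ψ q q' / (Nat.gcd q q' : ℝ) then (1:ℝ) else 0) ≤ ψ q := by
      intro q' _
      have h1 : (Nat.gcd q' q : ℝ) ≤ q := by exact_mod_cast Nat.gcd_le_right q' (by omega)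
      calc _ ≤ (ψ q / q) * q * 1 := by
            gcongr
            split_ifs <;> norm_num
        _ = ψ q := by field_simp
    have h1 := Finset.sum_le_sum hterm
    rw [Finset.sum_const, Nat.card_Ico, nsmul_eq_mul] at h1
    have h2 : ((q - 1 : ℕ):ℝ) ≤ q₀ := by exact_mod_cast (by omega : q - 1 ≤ q₀)
    have h3 : ((q - 1 : ℕ):ℝ) * ψ q ≤ q₀ * ψ q := by gcongr
    have h4 : 0 ≤ (192 * C + 25) * ψ q * (∑ r ∈ q.divisors, Real.logb 2 r / r) := by positivity
    have h5 : 0 ≤ (1 + (24 * C + 4)) * ψ q := by positivity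
    linarith
  rcases hψ.eq_or_lt with h0 | hpos
  · rw [← h0]; simp
  have hΩ' : (q.primeFactorsList.length : ℝ) ≤ (Real.logb 2 q) ^ b := by
    by_contra hcon
    push Not at hcon
    exact hpos.ne' (hΩ q (by omega) hcon)
  obtain ⟨hc1, hc2⟩ := hq₀ q hge
  simp only [Function.comp] at hc1 hc2
  set L := (Real.logb 2 q) ^ b with hL
  have hlogq : 1 ≤ Real.logb 2 q := by
    rw [Real.le_logb_iff_rpow_le (by norm_num) hqr]
    simpa using (by exact_mod_cast (by omega : 2 ≤ q) : (2:ℝ) ≤ q)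
  have hL1 : 1 ≤ L := Real.one_le_rpow hlogq (by linarith)
  have hcards : (q.divisors.card : ℝ) * (2:ℝ) ^ (-L) ≤ 1 := by
    have h1 : (q.divisors.card : ℝ) ≤ 2 ^ q.primeFactorsList.length := by
      exact_mod_cast card_div_le (show q ≠ 0 by omega)
    have h2 : (2:ℝ) ^ q.primeFactorsList.length ≤ 2 ^ L := by
      rw [← Real.rpow_natCast]
      exact Real.rpow_le_rpow_of_exponent_le (by norm_num) hΩ'
    rw [Real.rpow_neg (by norm_num), mul_inv_le_iff₀ (by positivity)]
    linarith
  have hper : ∀ d ∈ q.divisors, ((d:ℝ) / q) * ((Gset γ C d (q / d)).card : ℝ) ≤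
      (192 * C + 25) * (Real.logb 2 d / d) + (if d = 1 then 1 else 0) + (24 * C + 4) * (2:ℝ) ^ (-L) := by
    intro d hd
    have hn1 := hlognn d hd
    have hd1 := Nat.pos_of_mem_divisors hd
    obtain ⟨r, hr⟩ := Nat.dvd_of_mem_divisors hd
    have hrd : q / d = r := by rw [hr]; exact Nat.mul_div_cancel_left r hd1
    rw [hrd]
    have hr1 : 1 ≤ r := by
      rcases Nat.eq_zero_or_pos r with h | h
      · subst h; omega
      · exact h
    have hd0 : (0:ℝ) < d := by exact_mod_cast hd1
    have hr0 : (0:ℝ) < r := by exact_mod_cast hr1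
    have hqd : (d:ℝ) / q = 1 / r := by rw [hr]; push_cast; field_simp
    rw [hqd]
    have hpow : 0 ≤ (24 * C + 4) * (2:ℝ) ^ (-L) := by positivity
    have hmain : 0 ≤ (192 * C + 25) * (Real.logb 2 d / d) := by positivity
    by_cases hd' : d = 1
    · rw [if_pos hd']
      have : ((Gset γ C d r).card : ℝ) ≤ r := by
        have h1 : (Gset γ C d r).card ≤ (Finset.Ico 1 r).card := by
          unfold Gset; exact Finset.card_filter_le _ _
        rw [Nat.card_Ico] at h1
        exact_mod_cast (by omega : (Gset γ C d r).card ≤ r)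
      have : 1 / (r:ℝ) * ((Gset γ C d r).card : ℝ) ≤ 1 := by
        rw [one_div, inv_mul_le_iff₀ hr0]; linarith
      linarith
    rw [if_neg hd']
    have hd2 : 2 ≤ d := by omega
    rw [one_div, inv_mul_le_iff₀ hr0]
    rcases le_or_gt (Real.logb 2 d) (2 * L) with h | h
    · have hlogd : 0 ≤ Real.logb 2 d := Real.logb_nonneg (by norm_num) (by exact_mod_cast hd1)
      have hA := caseA hB hT hC hd2 hr1 (by
        rw [← hr]
        refine le_trans ?_ hc1
        gcongr)
      refine hA.trans ?_
      have e : (192 * C + 25) * ((r:ℝ) / d) * Real.logb 2 d = r * ((192 * C + 25) * (Real.logb 2 d / d)) := by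
        ring
      rw [e]
      gcongr
      linarith
    · have hBc := caseB hB (by linarith) hT hC hd1 hr1 hL1 (by
        rw [← Real.le_logb_iff_rpow_le (by norm_num) hd0]; exact h.le) (by rw [← hr]; exact hc2)
      refine hBc.trans ?_
      have e : (24 * C + 4) * (r:ℝ) * (2:ℝ) ^ (-L) = r * ((24 * C + 4) * (2:ℝ) ^ (-L)) := by ring
      rw [e]
      gcongr
      linarith
  have hmaps : ∀ q' ∈ Finset.Ico 1 q, Nat.gcd q' q ∈ q.divisors := by
    intro q' _
    rw [Nat.mem_divisors]
    exact ⟨Nat.gcd_dvd_right _ _, by omega⟩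
  rw [← Finset.sum_fiberwise_of_maps_to hmaps]
  have hfib : ∀ d ∈ q.divisors, ∑ q' ∈ (Finset.Ico 1 q).filter (fun q' => Nat.gcd q' q = d),
      (ψ q / q) * (Nat.gcd q' q : ℝ) *
        (if dnint (γ * ((q : ℝ) - q') / (Nat.gcd q q' : ℝ))
            ≤ Δfun ψ q q' / (Nat.gcd q q' : ℝ) then (1:ℝ) else 0) ≤
      ψ q * (((d:ℝ) / q) * ((Gset γ C d (q / d)).card : ℝ)) := by
    intro d hd
    have hd1 := Nat.pos_of_mem_divisors hd
    obtain ⟨r, hr⟩ := Nat.dvd_of_mem_divisors hd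
    have hrd : q / d = r := by rw [hr]; exact Nat.mul_div_cancel_left r hd1
    rw [hrd]
    have e1 : ∀ q' ∈ (Finset.Ico 1 q).filter (fun q' => Nat.gcd q' q = d),
      (ψ q / q) * (Nat.gcd q' q : ℝ) *
        (if dnint (γ * ((q : ℝ) - q') / (Nat.gcd q q' : ℝ))
            ≤ Δfun ψ q q' / (Nat.gcd q q' : ℝ) then (1:ℝ) else 0) = (ψ q / q) * d *
        (if dnint (γ * ((q : ℝ) - q') / (Nat.gcd q q' : ℝ))
            ≤ Δfun ψ q q' / (Nat.gcd q q' : ℝ) then (1:ℝ) else 0) := by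
      intro q' hq'
      rw [(Finset.mem_filter.1 hq').2]
    rw [Finset.sum_congr rfl e1, ← Finset.mul_sum, Finset.sum_boole]
    have hcd := fiber_card (γ := γ) hC hub (r := r) hd1 (((Finset.Ico 1 q).filter (fun q' => Nat.gcd q' q = d)).filter
      (fun q' : ℕ => dnint (γ * ((q : ℝ) - q') / (Nat.gcd q q' : ℝ))
            ≤ Δfun ψ q q' / (Nat.gcd q q' : ℝ))) (by
      intro q' hq'
      rw [Finset.mem_filter, Finset.mem_filter, Finset.mem_Ico] at hq'
      rw [← hr]
      exact ⟨hq'.1.1, hq'.1.2, hq'.2⟩)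
    have e2 : ψ q * (((d:ℝ) / q) * ((Gset γ C d r).card : ℝ)) = (ψ q / q) * d * ((Gset γ C d r).card : ℝ) := by
      ring
    rw [e2]
    gcongr
  refine (Finset.sum_le_sum hfib).trans ?_
  rw [← Finset.mul_sum]
  have h1 := Finset.sum_le_sum hper
  rw [Finset.sum_add_distrib, Finset.sum_add_distrib, Finset.sum_const, nsmul_eq_mul,
    ← Finset.mul_sum, Finset.sum_ite_eq', if_pos (Nat.one_mem_divisors.2 (by omega))] at h1
  have h2 : (q.divisors.card : ℝ) * ((24 * C + 4) * (2:ℝ) ^ (-L)) ≤ 24 * C + 4 := by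
    have : (q.divisors.card : ℝ) * ((24 * C + 4) * (2:ℝ) ^ (-L)) =
      (24 * C + 4) * ((q.divisors.card : ℝ) * (2:ℝ) ^ (-L)) := by ring
    rw [this]
    exact mul_le_of_le_one_right (by positivity) hcards
  have hq0 : (0:ℝ) ≤ q₀ := by positivity
  calc _ ≤ ψ q * ((192 * C + 25) * (∑ r ∈ q.divisors, Real.logb 2 r / r) + (q₀ + 1 + (24 * C + 4))) := by
        gcongr
        linarith
    _ = _ := by ring
end

section
/- Let γ be an irrational number, C > 0 and 0 < ε₁ < 1/2, and let ψ be an approximation function satisfying ψ(q) ≤ C·q⁻¹(log log q)⁻² for all q ≥ 3, ψ(1) = ψ(2) = 0, and ψ(q) = 0 whenever Ω(q) > (log q)^{1/2 + ε₁}. Then there exist constants C′, C″ > 0 (depending only on C and ε₁) with the following property: for every integer Q ≥ 2^{1000} and every integer σ ≥ 14 such that ‖Qγ‖ < Q^{−σ}, such that the nearest integer v to Qγ satisfies gcd(v,Q) = 1, and such that d(q)·log q ≤ Q for every integer q ≤ Q^{σ/2} with ψ(q) ≠ 0, one has for every integer q ∈ [Q⁷, Q^{σ/2}]: ∑_{1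 ≤ q′ < q} (ψ(q)/q)·gcd(q′,q)·𝟙[‖γ(q − q′)/gcd(q,q′)‖ ≤ Δ(q,q′)/gcd(q,q′)] ≤ C′·ψ(q)·(log log q)⁻²·∑_{r | q} (log r)/r + C″·ψ(q). -/
open MeasureTheory Filter Real

lemma aux_t (γ : ℝ) (Q : ℕ) (v n : ℤ) (δ : ℝ) (hQ : 0 < Q) (hv : IsCoprime (Q:ℤ) v)
    (hn : ¬ (Q:ℤ) ∣ n) (hd : dnint (γ * n) ≤ δ) (hs : |(n:ℝ)| * |(Q:ℝ) * γ - v| ≤ 1/2) :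
    1 ≤ 2 * Q * δ ∧ |((v * n - Q * round (γ * n) : ℤ) : ℝ)| ≤ 2 * Q * δ := by
  have hQ' : (0:ℝ) < Q := by exact_mod_cast hQ
  set t : ℤ := v * n - Q * round (γ * n) with ht
  have ht0 : t ≠ 0 := by
    intro h
    apply hn
    apply hv.dvd_of_dvd_mul_left
    exact ⟨round (γ * n), by linarith⟩
  have h1 : (1:ℝ) ≤ |(t:ℝ)| := by
    have : 1 ≤ |t| := Int.one_le_abs ht0
    exact_mod_cast this
  have h2 : |(t:ℝ)| ≤ Q * δ + 1/2 := by
    have e : (t:ℝ) = Q * (γ * n - round (γ * n)) - n * (Q * γ - v) := by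
      rw [ht]; push_cast; ring
    rw [e]
    calc _ ≤ |(Q:ℝ) * (γ * n - round (γ * n))| + |n * (Q * γ - v)| := abs_sub _ _
      _ ≤ _ := by
        rw [abs_mul, abs_mul, abs_of_pos hQ']
        unfold dnint at hd
        gcongr
  constructor <;> nlinarith

lemma aux_block (γ : ℝ) (Q r : ℕ) (v : ℤ) (δ M : ℝ) (hQ : 0 < Q) (hv : IsCoprime (Q:ℤ) v)
    (hδ : 0 ≤ δ) (hM : (Q:ℝ) ≤ 2 * M) (S : Finset ℕ)
    (hS : ∀ m ∈ S, M ≤ m ∧ (m:ℝ) < 2 * M ∧ ¬ (Q:ℤ) ∣ ((r:ℤ) - m) ∧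
      dnint (γ * (((r:ℤ) - m : ℤ) : ℝ)) ≤ δ ∧
      |(((r:ℤ) - m : ℤ) : ℝ)| * |(Q:ℝ) * γ - v| ≤ 1/2) :
    (S.card : ℝ) ≤ 30 * M * δ := by
  have hQ' : (0:ℝ) < Q := by exact_mod_cast hQ
  have hMpos : 0 < M := by linarith
  rcases S.eq_empty_or_nonempty with h | ⟨m0, hm0⟩
  · subst h; simp; positivity
  have hone : 1 ≤ 2 * Q * δ := by
    obtain ⟨_, _, h3, h4, h5⟩ := hS m0 hm0
    exact (aux_t γ Q v _ δ hQ hv h3 h4 h5).1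
  let f : ℕ → ℤ × ℕ := fun m =>
    (v * ((r:ℤ) - m) - Q * round (γ * (((r:ℤ) - m : ℤ) : ℝ)), m / Q)
  let T : ℤ := ⌊2 * Q * δ⌋
  have hT0 : 0 ≤ T := Int.floor_nonneg.2 (by linarith)
  have hcard : S.card ≤ (Finset.Icc (-T) T ×ˢ Finset.Icc ⌊M / Q⌋₊ ⌊2 * M / Q⌋₊).card := by
    apply Finset.card_le_card_of_injOn f
    · intro m hm
      obtain ⟨h1, h2, h3, h4, h5⟩ := hS m hm
      have h6 := (aux_t γ Q v _ δ hQ hv h3 h4 h5).2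
      have h7 : |v * ((r:ℤ) - m) - Q * round (γ * (((r:ℤ) - m : ℤ) : ℝ))| ≤ T := by
        apply Int.le_floor.2
        rw [Int.cast_abs]; exact h6
      have h8 := abs_le.1 h7
      simp only [Finset.coe_product, Finset.coe_Icc, Set.mem_prod, Set.mem_Icc, f]
      have e : m / Q = ⌊(m:ℝ) / Q⌋₊ := by rw [Nat.floor_div_natCast]; simp
      refine ⟨h8, ?_, ?_⟩
      · rw [e]; apply Nat.floor_le_floor; gcongr
      · rw [e]; apply Nat.floor_le_floor; gcongr
    · intro a _ b _ hab
      simp only [f, Prod.mk.injEq] at hab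
      obtain ⟨h1, h2⟩ := hab
      have h3 : (Q:ℤ) ∣ v * ((a:ℤ) - b) :=
        ⟨round (γ * (((r:ℤ) - b : ℤ) : ℝ)) - round (γ * (((r:ℤ) - a : ℤ) : ℝ)), by linarith⟩
      have h4 := hv.dvd_of_dvd_mul_left h3
      have h5 : a % Q = b % Q := by
        have : (b:ℤ) ≡ a [ZMOD Q] := Int.modEq_iff_dvd.2 h4
        exact ((Int.natCast_modEq_iff).1 this).symm
      rw [← Nat.div_add_mod a Q, ← Nat.div_add_mod b Q, h2, h5]
  rw [Finset.card_product, Int.card_Icc, Nat.card_Icc] at hcard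
  have h1 : (((T + 1 - -T).toNat : ℕ) : ℝ) ≤ 6 * Q * δ := by
    have : (((T + 1 - -T).toNat : ℕ) : ℤ) = 2 * T + 1 := by omega
    have h : (((T + 1 - -T).toNat : ℕ) : ℝ) = 2 * T + 1 := by exact_mod_cast this
    rw [h]
    have : (T:ℝ) ≤ 2 * Q * δ := Int.floor_le _
    linarith
  have h2 : ((⌊2 * M / Q⌋₊ + 1 - ⌊M / Q⌋₊ : ℕ) : ℝ) ≤ 5 * M / Q := by
    have hle : ⌊M / Q⌋₊ ≤ ⌊2 * M / Q⌋₊ := by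
      apply Nat.floor_le_floor; gcongr; linarith
    rw [Nat.cast_sub (by omega)]
    push_cast
    have a1 : (⌊2 * M / Q⌋₊ : ℝ) ≤ 2 * M / Q := Nat.floor_le (by positivity)
    have a2 : M / Q < ⌊M / Q⌋₊ + 1 := Nat.lt_floor_add_one _
    have a3 : 1 ≤ 2 * M / Q := by rw [le_div_iff₀ hQ']; linarith
    have e1 : 2 * M / Q = 2 * (M / Q) := by ring
    have e2 : 5 * M / Q = 5 * (M / Q) := by ring
    rw [e1] at a3
    have a4 := a1.trans_eq e1
    rw [e2]; linarith
  calc (S.card : ℝ) ≤ (((T + 1 - -T).toNat : ℕ) : ℝ) * ((⌊2 * M / Q⌋₊ + 1 - ⌊M / Q⌋₊ : ℕ) : ℝ) := by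
        exact_mod_cast hcard
    _ ≤ (6 * Q * δ) * (5 * M / Q) := by gcongr
    _ = 30 * M * δ := by field_simp; ring

/-- number of positive naturals below a bound -/
lemma aux_cnt (S : Finset ℕ) (x : ℝ) (hx : 0 ≤ x) (hS : ∀ m ∈ S, 1 ≤ m ∧ (m:ℝ) ≤ x) :
    (S.card : ℝ) ≤ x := by
  have : S ⊆ Finset.Icc 1 ⌊x⌋₊ := by
    intro m hm
    rw [Finset.mem_Icc]
    exact ⟨(hS m hm).1, Nat.le_floor (hS m hm).2⟩
  have := Finset.card_le_card this
  rw [Nat.card_Icc] at this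
  calc (S.card : ℝ) ≤ (⌊x⌋₊ : ℝ) := by exact_mod_cast (by omega)
    _ ≤ x := Nat.floor_le hx

lemma aux_mult (S : Finset ℕ) (Q r : ℕ) (hQ : 0 < Q)
    (hS : ∀ m ∈ S, m < r ∧ (Q:ℤ) ∣ ((r:ℤ) - m)) :
    (S.card : ℝ) ≤ r / Q := by
  have hQ' : (0:ℝ) < Q := by exact_mod_cast hQ
  have hinj : Set.InjOn (fun m => (r - m) / Q) S := by
    intro a ha b hb hab
    have ha' := hS a ha
    have hb' := hS b hb
    have h1 : Q ∣ r - a := by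
      have := ha'.2
      rw [← Nat.cast_sub ha'.1.le] at this; exact_mod_cast this
    have h2 : Q ∣ r - b := by
      have := hb'.2
      rw [← Nat.cast_sub hb'.1.le] at this; exact_mod_cast this
    have h3 := (Nat.div_left_inj h1 h2).1 hab
    omega
  rw [← Finset.card_image_of_injOn hinj]
  apply aux_cnt _ _ (by positivity)
  intro k hk
  obtain ⟨m, hm, rfl⟩ := Finset.mem_image.1 hk
  have hm' := hS m hm
  have h1 : Q ∣ r - m := by
    have := hm'.2
    rw [← Nat.cast_sub hm'.1.le] at this; exact_mod_cast this
  refine ⟨Nat.div_pos (Nat.le_of_dvd (by omega) h1) hQ, ?_⟩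
  calc (((r - m) / Q : ℕ) : ℝ) ≤ ((r - m : ℕ) : ℝ) / Q := Nat.cast_div_le
    _ ≤ r / Q := by gcongr; omega

lemma aux_log (g L : ℝ) (hg : 1 ≤ g) (hL : 2 ≤ L) :
    1 / (g * L^2) ≤ Real.logb 2 g / g * L⁻¹ ^ 2 + 2 / g ^ 2 ∧
    Real.logb 2 L / (g * L^2) ≤ Real.logb 2 g / g * L⁻¹ ^ 2 + 2 / g ^ 2 := by
  have hlog1 : 1 ≤ Real.logb 2 L := by
    rw [Real.le_logb_iff_rpow_le (by norm_num) (by linarith)]; simpa using hL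
  have key : Real.logb 2 L / (g * L^2) ≤ Real.logb 2 g / g * L⁻¹ ^ 2 + 2 / g ^ 2 := by
    have hg0 : 0 < g := by linarith
    have hlg : 0 ≤ Real.logb 2 g := Real.logb_nonneg (by norm_num) hg
    rcases le_total L g with h | h
    · have : Real.logb 2 L ≤ Real.logb 2 g :=
        Real.logb_le_logb_of_le (by norm_num) (by linarith) h
      calc Real.logb 2 L / (g * L^2) ≤ Real.logb 2 g / (g * L^2) := by gcongr
        _ = Real.logb 2 g / g * L⁻¹ ^ 2 := by field_simp
        _ ≤ _ := by have : 0 ≤ 2 / g ^ 2 := by positivity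
                    linarith
    · have h1 : Real.logb 2 L ≤ 2 * L := by
        have h2 : Real.log L ≤ L := (Real.log_le_sub_one_of_pos (by linarith)).trans (by linarith)
        have h3 : 0.5 ≤ Real.log 2 := by have := Real.log_two_gt_d9; linarith
        rw [Real.logb, div_le_iff₀ (by linarith)]
        nlinarith
      calc Real.logb 2 L / (g * L^2) ≤ 2 * L / (g * L^2) := by gcongr
        _ = 2 / (g * L) := by field_simp
        _ ≤ 2 / g^2 := by rw [pow_two]; gcongr
        _ ≤ _ := by have : 0 ≤ Real.logb 2 g / g * L⁻¹ ^ 2 := by positivity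
                    linarith
  refine ⟨le_trans ?_ key, key⟩
  gcongr

lemma aux_sq (S : Finset ℕ) (hS : ∀ g ∈ S, 1 ≤ g) : ∑ g ∈ S, 1 / (g:ℝ)^2 ≤ 2 := by
  have h1 : ∀ N : ℕ, ∑ g ∈ Finset.range N, 1 / ((g:ℝ)+1)^2 ≤ 2 - 2 / ((N:ℝ) + 1) := by
    intro N
    induction N with
    | zero => simp
    | succ k ih =>
      rw [Finset.sum_range_succ]
      have : 1 / ((k:ℝ)+1)^2 ≤ 2 / ((k:ℝ)+1) - 2 / (((k+1:ℕ):ℝ) + 1) := by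
        push_cast
        rw [div_sub_div _ _ (by positivity) (by positivity),
          div_le_div_iff₀ (by positivity) (by positivity)]
        nlinarith [(Nat.cast_nonneg k : (0:ℝ) ≤ k), sq_nonneg (k:ℝ),
          pow_nonneg (Nat.cast_nonneg k : (0:ℝ) ≤ k) 3]
      linarith
  have h2 : S ⊆ (Finset.range (S.sup id)).image (fun x : ℕ => x + 1) := by
    intro g hg
    have h3 := hS g hg
    have h4 : g ≤ S.sup id := Finset.le_sup (f := id) hg
    rw [Finset.mem_image]
    exact ⟨g - 1, by rw [Finset.mem_range]; omega, by omega⟩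
  calc ∑ g ∈ S, 1 / (g:ℝ)^2
      ≤ ∑ g ∈ (Finset.range (S.sup id)).image (fun x : ℕ => x + 1), 1 / (g:ℝ)^2 :=
        Finset.sum_le_sum_of_subset_of_nonneg h2 (fun _ _ _ => by positivity)
    _ = ∑ g ∈ Finset.range (S.sup id), 1 / ((g:ℝ)+1)^2 := by
        rw [Finset.sum_image (by intro a _ b _ h; simp only at h; omega)]
        push_cast; rfl
    _ ≤ _ := h1 _
    _ ≤ 2 := by
        have : (0:ℝ) ≤ 2 / (((S.sup id : ℕ):ℝ) + 1) := by positivity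
        linarith

open Classical in
lemma aux_key (D γ L : ℝ) (ψ : ℕ → ℝ) (Q q g r : ℕ) (v : ℤ) (hD : 0 < D) (hL : 2 ≤ L)
    (hq : q = g * r) (hg : 1 ≤ g) (hr : 1 ≤ r) (hQ : 1 ≤ Q)
    (hv : IsCoprime (Q:ℤ) v)
    (hψ : ∀ q' : ℕ, √(q:ℝ) ≤ q' → q' ≤ q → ψ q' ≤ D / 2 / (q' * L^2))
    (hθ : (q:ℝ) * |(Q:ℝ) * γ - v| ≤ 1/2)
    (hQ7 : (Q:ℝ)^7 ≤ q)
    (S : Finset ℕ)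
    (hS : ∀ m ∈ S, 1 ≤ m ∧ m < r ∧
      dnint (γ * (((r:ℤ) - m : ℤ) : ℝ)) ≤ Δfun ψ q (g * m) / g) :
    (S.card : ℝ) ≤ √(q:ℝ) / g + r / Q + (1 + 2 * D) * r / Q^2 + r / (g * L^2)
      + (Real.logb 2 g + 2 * Real.logb 2 L + 1) * (30 * D * r / (g * L^2)) := by
  have hg' : (1:ℝ) ≤ g := by exact_mod_cast hg
  have hr' : (1:ℝ) ≤ r := by exact_mod_cast hr
  have hQ' : (1:ℝ) ≤ Q := by exact_mod_cast hQ
  have hg0 : (0:ℝ) < g := by linarith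
  have hr0 : (0:ℝ) < r := by linarith
  have hQ0 : (0:ℝ) < Q := by linarith
  have hL0 : 0 < L := by linarith
  have hqr : (q:ℝ) = g * r := by exact_mod_cast hq
  have hq1 : (1:ℝ) ≤ q := by rw [hqr]; nlinarith
  set X : ℝ := r / (g * L^2) with hX
  have hX0 : 0 < X := by positivity
  set S1 := S.filter (fun m : ℕ => (g:ℝ) * m ≤ √(q:ℝ)) with hS1
  set S2 := S.filter (fun m : ℕ => (Q:ℤ) ∣ ((r:ℤ) - m)) with hS2
  set R := S.filter (fun m : ℕ => √(q:ℝ) < (g:ℝ) * m ∧ ¬ (Q:ℤ) ∣ ((r:ℤ) - m)) with hR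
  set S3 := R.filter (fun m : ℕ => m < Q) with hS3
  set S4 := S.filter (fun m : ℕ => (m:ℝ) ≤ X) with hS4
  let S5 : ℕ → Finset ℕ := fun i => R.filter
    (fun m : ℕ => Q ≤ m ∧ 2^i * X ≤ m ∧ (m:ℝ) < 2 * (2^i * X))
  -- facts on R
  have hRfact : ∀ m : ℕ, m ∈ R → 1 ≤ m ∧ m < r ∧ ¬ (Q:ℤ) ∣ ((r:ℤ) - m) ∧
      dnint (γ * (((r:ℤ) - m : ℤ) : ℝ)) ≤ D * r / (m * (g * L^2)) ∧
      |(((r:ℤ) - m : ℤ) : ℝ)| * |(Q:ℝ) * γ - v| ≤ 1/2 := by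
    intro m hm
    rw [hR, Finset.mem_filter] at hm
    obtain ⟨hmS, hm1, hm2⟩ := hm
    obtain ⟨h1, h2, h3⟩ := hS m hmS
    have h1' : (1:ℝ) ≤ m := by exact_mod_cast h1
    have h2' : (m:ℝ) < r := by exact_mod_cast h2
    have hm0 : (0:ℝ) < m := by linarith
    refine ⟨h1, h2, hm2, h3.trans ?_, le_trans ?_ hθ⟩
    · have hgm : g * m ≤ q := by rw [hq]; exact Nat.mul_le_mul_left _ h2.le
      have e1 := hψ (g * m) (by push_cast; exact hm1.le) hgm
      have hsq : √(q:ℝ) ≤ q := by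
        rw [Real.sqrt_le_left (by linarith)]; nlinarith
      have e2 := hψ q hsq le_rfl
      unfold Δfun
      rw [div_le_iff₀ hg0]
      have e3 : (q:ℝ) * ψ (g * m) ≤ D / 2 * r / (m * L^2) := by
        calc (q:ℝ) * ψ (g * m) ≤ q * (D / 2 / ((g * m : ℕ) * L^2)) := by gcongr
          _ = _ := by rw [hqr]; push_cast; field_simp
      have e4 : ((g * m : ℕ) : ℝ) * ψ q ≤ D / 2 * r / (m * L^2) := by
        calc ((g * m : ℕ) : ℝ) * ψ q ≤ ((g * m : ℕ) : ℝ) * (D / 2 / (q * L^2)) := by gcongr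
          _ = D / 2 * m / (r * L^2) := by rw [hqr]; push_cast; field_simp
          _ ≤ _ := by gcongr
      calc _ ≤ D / 2 * r / (m * L^2) + D / 2 * r / (m * L^2) := add_le_add e3 e4
        _ = _ := by field_simp; ring
    · gcongr
      push_cast
      rw [abs_of_pos (by linarith), hqr]
      nlinarith
  have c1 : (S1.card : ℝ) ≤ √(q:ℝ) / g := by
    apply aux_cnt _ _ (by positivity)
    intro m hm
    rw [hS1, Finset.mem_filter] at hm
    refine ⟨(hS m hm.1).1, ?_⟩
    rw [le_div_iff₀ hg0]; linarith [hm.2]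
  have c2 : (S2.card : ℝ) ≤ r / Q := by
    apply aux_mult _ _ _ hQ
    intro m hm
    rw [hS2, Finset.mem_filter] at hm
    exact ⟨(hS m hm.1).2.1, hm.2⟩
  have c4 : (S4.card : ℝ) ≤ X := by
    apply aux_cnt _ _ hX0.le
    intro m hm
    rw [hS4, Finset.mem_filter] at hm
    exact ⟨(hS m hm.1).1, hm.2⟩
  have c3 : (S3.card : ℝ) ≤ (1 + 2 * D) * r / Q^2 := by
    rcases S3.eq_empty_or_nonempty with h | ⟨m, hm⟩
    · rw [h]; simp; positivity
    have hc : (S3.card : ℝ) ≤ Q := by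
      apply aux_cnt _ _ hQ0.le
      intro m hm
      rw [hS3, Finset.mem_filter] at hm
      exact ⟨(hRfact m hm.1).1, by exact_mod_cast hm.2.le⟩
    apply hc.trans
    rw [hS3, Finset.mem_filter] at hm
    obtain ⟨h1, h2, h3, h4, h5⟩ := hRfact m hm.1
    have h1' : (1:ℝ) ≤ m := by exact_mod_cast h1
    have h6 := (aux_t γ Q v _ _ hQ hv h3 h4 h5).1
    have h7 : D * r / (m * (g * L^2)) ≤ D * r / g := by
      gcongr
      have : 1 ≤ L^2 := by nlinarith
      calc (g:ℝ) = 1 * (g * 1) := by ring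
        _ ≤ m * (g * L^2) := by gcongr
    have h8 : 1 ≤ 2 * Q * (D * r / g) := h6.trans (by gcongr)
    have h9 : (g:ℝ) ≤ 2 * Q * D * r := by
      rw [← mul_div_assoc, le_div_iff₀ hg0] at h8; linarith
    have h10 : (Q:ℝ)^7 ≤ 2 * Q * D * r * r := by
      rw [hqr] at hQ7
      exact hQ7.trans (by gcongr)
    have h11 : (Q:ℝ)^6 ≤ 2 * D * r ^ 2 := by
      have : (Q:ℝ) * Q^6 ≤ Q * (2 * D * r^2) := by linarith
      exact le_of_mul_le_mul_left this hQ0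
    have h12 : (Q:ℝ)^3 ≤ (1 + 2 * D) * r := by
      apply le_of_sq_le_sq _ (by positivity)
      calc ((Q:ℝ)^3)^2 = Q^6 := by ring
        _ ≤ 2 * D * r^2 := h11
        _ ≤ (1 + 2 * D)^2 * r^2 := by gcongr; nlinarith
        _ = _ := by ring
    rw [le_div_iff₀ (by positivity)]
    linarith
  have c5 : ∀ i, ((S5 i).card : ℝ) ≤ 30 * D * r / (g * L^2) := by
    intro i
    have hMi : 0 < 2^i * X := by positivity
    rcases (S5 i).eq_empty_or_nonempty with h | ⟨m0, hm0⟩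
    · rw [h]; simp; positivity
    have hQM : (Q:ℝ) ≤ 2 * (2^i * X) := by
      rw [Finset.mem_filter] at hm0
      have : (Q:ℝ) ≤ m0 := by exact_mod_cast hm0.2.1
      linarith [hm0.2.2.2]
    have := aux_block γ Q r v (D * r / (2^i * X * (g * L^2))) (2^i * X) hQ hv (by positivity)
      hQM (S5 i) (by
        intro m hm
        rw [Finset.mem_filter] at hm
        obtain ⟨h1, h2, h3, h4, h5⟩ := hRfact m hm.1
        refine ⟨hm.2.2.1, hm.2.2.2, h3, h4.trans ?_, h5⟩
        gcongr
        exact hm.2.2.1)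
    apply this.trans_eq
    field_simp
  set N : ℕ := ⌊Real.logb 2 g + 2 * Real.logb 2 L⌋₊ + 1 with hN
  have hlg : 0 ≤ Real.logb 2 g := Real.logb_nonneg (by norm_num) hg'
  have hlL : 0 ≤ Real.logb 2 L := Real.logb_nonneg (by norm_num) (by linarith)
  have hNle : (N:ℝ) ≤ Real.logb 2 g + 2 * Real.logb 2 L + 1 := by
    rw [hN]; push_cast
    have := Nat.floor_le (show 0 ≤ Real.logb 2 g + 2 * Real.logb 2 L by positivity)
    linarith
  have hsub : S ⊆ S1 ∪ S2 ∪ S3 ∪ S4 ∪ (Finset.range N).biUnion S5 := by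
    intro m hm
    simp only [Finset.mem_union]
    by_cases k1 : (g:ℝ) * m ≤ √(q:ℝ)
    · left; left; left; left; exact Finset.mem_filter.2 ⟨hm, k1⟩
    by_cases k2 : (Q:ℤ) ∣ ((r:ℤ) - m)
    · left; left; left; right; exact Finset.mem_filter.2 ⟨hm, k2⟩
    have hmR : m ∈ R := Finset.mem_filter.2 ⟨hm, not_le.1 k1, k2⟩
    by_cases k3 : m < Q
    · left; left; right; exact Finset.mem_filter.2 ⟨hmR, k3⟩
    by_cases k4 : (m:ℝ) ≤ X
    · left; right; exact Finset.mem_filter.2 ⟨hm, k4⟩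
    right
    push Not at k3 k4
    obtain ⟨i, hi1, hi2⟩ := exists_nat_pow_near (x := (m:ℝ) / X) (y := 2)
      (by rw [le_div_iff₀ hX0]; linarith) (by norm_num)
    rw [le_div_iff₀ hX0] at hi1
    rw [div_lt_iff₀ hX0] at hi2
    refine Finset.mem_biUnion.2 ⟨i, ?_, Finset.mem_filter.2 ⟨hmR, k3, hi1, ?_⟩⟩
    · have hmr : (m:ℝ) < r := by exact_mod_cast (hS m hm).2.1
      have h2 : (2:ℝ)^i ≤ g * L^2 := by
        have : (2:ℝ)^i * X ≤ (g * L^2) * X := by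
          have : g * L^2 * X = r := by rw [hX]; field_simp
          linarith
        exact le_of_mul_le_mul_right this hX0
      have h3 : (i:ℝ) ≤ Real.logb 2 g + 2 * Real.logb 2 L := by
        have e : Real.logb 2 g + 2 * Real.logb 2 L = Real.logb 2 (g * L^2) := by
          rw [Real.logb_mul (by positivity) (by positivity), Real.logb_pow]; push_cast; rfl
        rw [e, Real.le_logb_iff_rpow_le (by norm_num) (by positivity), Real.rpow_natCast]
        exact h2
      rw [Finset.mem_range, hN]
      exact Nat.lt_succ_of_le (Nat.le_floor h3)
    · rw [pow_succ] at hi2; linarith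
  have hcard : S.card ≤ S1.card + S2.card + S3.card + S4.card
      + ∑ i ∈ Finset.range N, (S5 i).card := by
    refine (Finset.card_le_card hsub).trans ((Finset.card_union_le _ _).trans ?_)
    refine add_le_add ((Finset.card_union_le _ _).trans (add_le_add ((Finset.card_union_le _ _).trans
      (add_le_add (Finset.card_union_le _ _) le_rfl)) le_rfl)) Finset.card_biUnion_le
  have hcard' : (S.card : ℝ) ≤ S1.card + S2.card + S3.card + S4.card
      + ∑ i ∈ Finset.range N, ((S5 i).card : ℝ) := by exact_mod_cast hcard
  have hsum : ∑ i ∈ Finset.range N, ((S5 i).card : ℝ) ≤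
      (Real.logb 2 g + 2 * Real.logb 2 L + 1) * (30 * D * r / (g * L^2)) := by
    calc _ ≤ ∑ i ∈ Finset.range N, (30 * D * r / (g * L^2)) := Finset.sum_le_sum (fun i _ => c5 i)
      _ = N * (30 * D * r / (g * L^2)) := by simp
      _ ≤ _ := by gcongr
  linarith

/-- normalised version -/
lemma aux_key2 (D γ L : ℝ) (ψ : ℕ → ℝ) (Q q g r : ℕ) (v : ℤ) (hD : 0 < D) (hL : 2 ≤ L)
    (hq : q = g * r) (hg : 1 ≤ g) (hr : 1 ≤ r) (hQ : 1 ≤ Q)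
    (hv : IsCoprime (Q:ℤ) v)
    (hψ : ∀ q' : ℕ, √(q:ℝ) ≤ q' → q' ≤ q → ψ q' ≤ D / 2 / (q' * L^2))
    (hθ : (q:ℝ) * |(Q:ℝ) * γ - v| ≤ 1/2)
    (hQ7 : (Q:ℝ)^7 ≤ q)
    (S : Finset ℕ)
    (hS : ∀ m ∈ S, 1 ≤ m ∧ m < r ∧
      dnint (γ * (((r:ℤ) - m : ℤ) : ℝ)) ≤ Δfun ψ q (g * m) / g) :
    (g:ℝ) / q * S.card ≤ (3 + 2 * D) / Q
      + (1 + 30 * D) * (5 * (Real.logb 2 g / g * L⁻¹ ^ 2) + 8 * (1 / g ^ 2)) := by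
  have h := aux_key D γ L ψ Q q g r v hD hL hq hg hr hQ hv hψ hθ hQ7 S hS
  have hg' : (1:ℝ) ≤ g := by exact_mod_cast hg
  have hr' : (1:ℝ) ≤ r := by exact_mod_cast hr
  have hQ' : (1:ℝ) ≤ Q := by exact_mod_cast hQ
  have hg0 : (0:ℝ) < g := by linarith
  have hr0 : (0:ℝ) < r := by linarith
  have hQ0 : (0:ℝ) < Q := by linarith
  have hL0 : 0 < L := by linarith
  have hqr : (q:ℝ) = g * r := by exact_mod_cast hq
  have hq0 : (0:ℝ) < q := by rw [hqr]; positivity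
  obtain ⟨l1, l2⟩ := aux_log g L hg' hL
  have hlg : 0 ≤ Real.logb 2 g := Real.logb_nonneg (by norm_num) hg'
  have hlL : 0 ≤ Real.logb 2 L := Real.logb_nonneg (by norm_num) (by linarith)
  have b1 : (g:ℝ) / q * (√(q:ℝ) / g) ≤ 1 / Q := by
    have hs : (Q:ℝ) ≤ √(q:ℝ) := by
      apply Real.le_sqrt_of_sq_le
      exact le_trans (pow_le_pow_right₀ hQ' (by norm_num)) hQ7
    have hs0 : 0 < √(q:ℝ) := by positivity
    have e : (g:ℝ) / q * (√(q:ℝ) / g) = 1 / √(q:ℝ) := by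
      field_simp
      rw [Real.sq_sqrt hq0.le]
    rw [e]; gcongr
  have b2 : (g:ℝ) / q * (r / Q) = 1 / Q := by rw [hqr]; field_simp
  have b3 : (g:ℝ) / q * ((1 + 2 * D) * r / Q^2) ≤ (1 + 2 * D) / Q := by
    have e : (g:ℝ) / q * ((1 + 2 * D) * r / Q^2) = (1 + 2 * D) / Q^2 := by rw [hqr]; field_simp
    rw [e]; gcongr; nlinarith
  have b4 : (g:ℝ) / q * (r / (g * L^2)) = 1 / (g * L^2) := by rw [hqr]; field_simp
  have b5 : (g:ℝ) / q * ((Real.logb 2 g + 2 * Real.logb 2 L + 1) * (30 * D * r / (g * L^2)))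
     = 30 * D * (Real.logb 2 g / g * L⁻¹ ^ 2 + 2 * (Real.logb 2 L / (g * L^2)) + 1 / (g * L^2)) := by
    rw [hqr]; field_simp
  have b6 : Real.logb 2 g / g * L⁻¹ ^ 2 + 2 * (Real.logb 2 L / (g * L^2)) + 1 / (g * L^2)
      ≤ 5 * (Real.logb 2 g / g * L⁻¹ ^ 2) + 8 * (1 / g ^ 2) := by
    have : 0 ≤ Real.logb 2 g / g * L⁻¹ ^ 2 := by positivity
    have : (2:ℝ) / g^2 = 2 * (1 / g^2) := by ring
    rw [this] at l1 l2
    have : (0:ℝ) ≤ 1 / g^2 := by positivity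
    linarith
  have b7 : 1 / (g * L^2) ≤ 5 * (Real.logb 2 g / g * L⁻¹ ^ 2) + 8 * (1 / g ^ 2) := by
    refine le_trans ?_ b6
    have : 0 ≤ Real.logb 2 g / g * L⁻¹ ^ 2 := by positivity
    have : 0 ≤ Real.logb 2 L / (g * L^2) := by positivity
    linarith
  calc (g:ℝ) / q * S.card ≤ g / q * (√(q:ℝ) / g + r / Q + (1 + 2 * D) * r / Q^2 + r / (g * L^2)
      + (Real.logb 2 g + 2 * Real.logb 2 L + 1) * (30 * D * r / (g * L^2))) := by gcongr
    _ = g / q * (√(q:ℝ) / g) + g / q * (r / Q) + g / q * ((1 + 2 * D) * r / Q^2)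
        + g / q * (r / (g * L^2))
        + g / q * ((Real.logb 2 g + 2 * Real.logb 2 L + 1) * (30 * D * r / (g * L^2))) := by ring
    _ ≤ 1 / Q + 1 / Q + (1 + 2 * D) / Q + (5 * (Real.logb 2 g / g * L⁻¹ ^ 2) + 8 * (1 / g ^ 2))
        + 30 * D * (5 * (Real.logb 2 g / g * L⁻¹ ^ 2) + 8 * (1 / g ^ 2)) := by
      rw [b2, b4, b5]
      gcongr
    _ = _ := by ring
open Classical in
theorem stmt11 (C : ℝ) (hC : 0 < C) (ε₁ : ℝ) (hε₁ : 0 < ε₁) (hε₁' : ε₁ < 1/2) :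
    ∃ C' > (0:ℝ), ∃ C'' > (0:ℝ),
      ∀ γ : ℝ, Irrational γ →
      ∀ ψ : ℕ → ℝ, (∀ q, 0 ≤ ψ q) →
      (∀ q : ℕ, 3 ≤ q → ψ q ≤ C / ((q : ℝ) * (Real.logb 2 (Real.logb 2 q)) ^ 2)) →
      ψ 1 = 0 → ψ 2 = 0 →
      (∀ q : ℕ, 1 ≤ q →
        ((q.primeFactorsList.length : ℝ) > (Real.logb 2 q) ^ ((1:ℝ)/2 + ε₁) → ψ q = 0)) →
      ∀ Q : ℕ, 2 ^ 1000 ≤ Q → ∀ σ : ℕ, 14 ≤ σ →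
      dnint ((Q : ℝ) * γ) < (Q : ℝ) ^ (-(σ : ℝ)) →
      Int.gcd (round ((Q : ℝ) * γ)) (Q : ℤ) = 1 →
      (∀ q : ℕ, 1 ≤ q → (q : ℝ) ≤ (Q : ℝ) ^ ((σ : ℝ) / 2) → ψ q ≠ 0 →
        (q.divisors.card : ℝ) * Real.logb 2 q ≤ Q) →
      ∀ q : ℕ, (Q : ℝ) ^ (7 : ℕ) ≤ (q : ℝ) → (q : ℝ) ≤ (Q : ℝ) ^ ((σ : ℝ) / 2) →
      ∑ q' ∈ Finset.Ico 1 q, (ψ q / q) * (Nat.gcd q' q : ℝ) *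
        (if dnint (γ * ((q : ℝ) - q') / (Nat.gcd q q' : ℝ))
            ≤ Δfun ψ q q' / (Nat.gcd q q' : ℝ) then 1 else 0)
      ≤ C' * ψ q * (Real.logb 2 (Real.logb 2 q))⁻¹ ^ 2 *
          (∑ r ∈ q.divisors, Real.logb 2 r / r)
        + C'' * ψ q := by
  classical
  set D : ℝ := 8 * C with hD
  have hD0 : 0 < D := by positivity
  refine ⟨5 * (1 + 30 * D), by positivity, 3 + 2 * D + 16 * (1 + 30 * D), by positivity, ?_⟩
  intro γ _ ψ hψ0 hψC _ _ _ Q hQ σ hσ hdn hgcd hdiv q hq7 hqσ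
  by_cases hψq : ψ q = 0
  · simp [hψq]
  set L := Real.logb 2 (Real.logb 2 q) with hLdef
  set v := round ((Q:ℝ) * γ) with hvdef
  have hQbig : (2:ℝ)^1000 ≤ Q := by exact_mod_cast hQ
  have hQ2 : (2:ℝ) ≤ Q := le_trans (by
    calc (2:ℝ) = 2^1 := by norm_num
      _ ≤ 2^1000 := pow_le_pow_right₀ (by norm_num) (by norm_num)) hQbig
  have hQ16 : (2:ℝ)^16 ≤ Q :=
    le_trans (pow_le_pow_right₀ (by norm_num) (by norm_num)) hQbig
  clear hQbig hQ
  have hQ1 : 1 ≤ Q := by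
    have : (1:ℝ) ≤ Q := by linarith
    exact_mod_cast this
  have hqQ : (Q:ℝ) ≤ q := by
    calc (Q:ℝ) = Q^1 := by ring
      _ ≤ Q^7 := pow_le_pow_right₀ (by linarith) (by norm_num)
      _ ≤ q := hq7
  have hq16 : (2:ℝ)^16 ≤ q :=
    le_trans hQ16 hqQ
  have hq0 : (0:ℝ) < q := by linarith
  have hqpos : 0 < q := by exact_mod_cast hq0
  have hlog16 : 16 ≤ Real.logb 2 q := by
    rw [Real.le_logb_iff_rpow_le (by norm_num) hq0]
    exact_mod_cast hq16
  have hL4 : 4 ≤ L := by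
    rw [hLdef, Real.le_logb_iff_rpow_le (by norm_num) (by linarith)]
    norm_num; exact hlog16
  have hv : IsCoprime (Q:ℤ) v := (Int.isCoprime_iff_gcd_eq_one.2 hgcd).symm
  have hψ : ∀ q' : ℕ, √(q:ℝ) ≤ q' → q' ≤ q → ψ q' ≤ D / 2 / (q' * L^2) := by
    intro q' h1 _
    have hs : (3:ℝ) ≤ √(q:ℝ) := Real.le_sqrt_of_sq_le (by norm_num at hq16 ⊢; linarith)
    have h3 : (3:ℝ) ≤ q' := hs.trans h1
    have h2 : Real.logb 2 q / 2 ≤ Real.logb 2 q' := by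
      have e : Real.logb 2 (√(q:ℝ)) = Real.logb 2 q / 2 := by
        rw [Real.logb, Real.logb, Real.log_sqrt hq0.le]; ring
      rw [← e]
      exact Real.logb_le_logb_of_le (by norm_num) (by linarith) h1
    have h4 : L / 2 ≤ Real.logb 2 (Real.logb 2 q') := by
      have e : Real.logb 2 (Real.logb 2 q / 2) = L - 1 := by
        rw [Real.logb_div (by linarith) (by norm_num), Real.logb_self_eq_one (by norm_num)]
      have := Real.logb_le_logb_of_le (b := 2) (by norm_num) (by linarith) h2
      rw [e] at this; linarith
    refine (hψC q' (by exact_mod_cast h3)).trans ?_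
    calc C / ((q':ℝ) * (Real.logb 2 (Real.logb 2 q')) ^ 2) ≤ C / ((q':ℝ) * (L/2)^2) := by gcongr
      _ = D / 2 / (q' * L^2) := by rw [hD]; field_simp; ring
  have hθ : (q:ℝ) * |(Q:ℝ) * γ - v| ≤ 1/2 := by
    have h1 : |(Q:ℝ) * γ - v| ≤ (Q:ℝ) ^ (-(σ:ℝ)) := hdn.le
    have hσ' : (14:ℝ) ≤ σ := by exact_mod_cast hσ
    calc (q:ℝ) * |(Q:ℝ) * γ - v| ≤ (Q:ℝ) ^ ((σ:ℝ)/2) * (Q:ℝ) ^ (-(σ:ℝ)) := by gcongr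
      _ = (Q:ℝ) ^ (-((σ:ℝ)/2)) := by
        rw [← Real.rpow_add (by linarith)]; congr 1; ring
      _ ≤ (Q:ℝ) ^ (-1:ℝ) := Real.rpow_le_rpow_of_exponent_le (by linarith) (by linarith)
      _ = 1 / Q := by rw [Real.rpow_neg_one]; ring
      _ ≤ 1 / 2 := by gcongr
  have hd : (q.divisors.card : ℝ) ≤ Q := by
    have := hdiv q hqpos hqσ hψq
    nlinarith [(Nat.cast_nonneg q.divisors.card : (0:ℝ) ≤ q.divisors.card)]
  have hmaps : ∀ q' ∈ Finset.Ico 1 q, Nat.gcd q' q ∈ q.divisors := fun q' _ =>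
    Nat.mem_divisors.2 ⟨Nat.gcd_dvd_right _ _, hqpos.ne'⟩
  rw [← Finset.sum_fiberwise_of_maps_to hmaps]
  have hinner : ∀ g ∈ q.divisors,
      ∑ q' ∈ Finset.Ico 1 q with Nat.gcd q' q = g, (ψ q / q) * (Nat.gcd q' q : ℝ) *
        (if dnint (γ * ((q : ℝ) - q') / (Nat.gcd q q' : ℝ))
            ≤ Δfun ψ q q' / (Nat.gcd q q' : ℝ) then (1:ℝ) else 0)
      ≤ ψ q * ((3 + 2 * D) / Q
      + (1 + 30 * D) * (5 * (Real.logb 2 g / g * L⁻¹ ^ 2) + 8 * (1 / (g:ℝ) ^ 2))) := by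
    intro g hg
    obtain ⟨⟨r, hr⟩, _⟩ := Nat.mem_divisors.1 hg
    have hg1 : 0 < g := Nat.pos_of_mem_divisors hg
    have hr1 : 0 < r := by
      rcases Nat.eq_zero_or_pos r with h | h
      · rw [h] at hr; simp at hr; omega
      · exact h
    have hg0 : (0:ℝ) < g := by exact_mod_cast hg1
    set S : Finset ℕ := (Finset.Ico 1 r).filter (fun m : ℕ =>
      dnint (γ * (((r:ℤ) - m : ℤ) : ℝ)) ≤ Δfun ψ q (g * m) / g) with hSdef
    have key := aux_key2 D γ L ψ Q q g r v hD0 (by linarith) hr hg1 hr1 hQ1 hv hψ hθ hq7 S (by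
      intro m hm
      rw [hSdef, Finset.mem_filter, Finset.mem_Ico] at hm
      exact ⟨hm.1.1, hm.1.2, hm.2⟩)
    set B : Finset ℕ := (Finset.Ico 1 q).filter (fun q' : ℕ => Nat.gcd q' q = g ∧
      dnint (γ * ((q : ℝ) - q') / (Nat.gcd q q' : ℝ))
            ≤ Δfun ψ q q' / (Nat.gcd q q' : ℝ)) with hB
    have hsumB : ∑ q' ∈ Finset.Ico 1 q with Nat.gcd q' q = g, (ψ q / q) * (Nat.gcd q' q : ℝ) *
        (if dnint (γ * ((q : ℝ) - q') / (Nat.gcd q q' : ℝ))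
            ≤ Δfun ψ q q' / (Nat.gcd q q' : ℝ) then (1:ℝ) else 0) = ψ q * (g / q * B.card) := by
      have e1 : ∀ q' ∈ (Finset.Ico 1 q).filter (fun q' : ℕ => Nat.gcd q' q = g),
          (ψ q / q) * (Nat.gcd q' q : ℝ) *
        (if dnint (γ * ((q : ℝ) - q') / (Nat.gcd q q' : ℝ))
            ≤ Δfun ψ q q' / (Nat.gcd q q' : ℝ) then (1:ℝ) else 0) =
          (ψ q / q) * g *
        (if dnint (γ * ((q : ℝ) - q') / (Nat.gcd q q' : ℝ))
            ≤ Δfun ψ q q' / (Nat.gcd q q' : ℝ) then (1:ℝ) else 0) := by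
        intro q' hq'
        rw [(Finset.mem_filter.1 hq').2]
      rw [Finset.sum_congr rfl e1, ← Finset.mul_sum, Finset.sum_boole, Finset.filter_filter, ← hB]
      ring
    rw [hsumB]
    have hBS : B.card ≤ S.card := by
      have hBg : ∀ a ∈ B, g ∣ a := by
        intro a ha
        rw [hB, Finset.mem_filter] at ha
        rw [← ha.2.1]; exact Nat.gcd_dvd_left _ _
      apply Finset.card_le_card_of_injOn (fun a => a / g)
      · intro a ha
        obtain ⟨m, rfl⟩ := hBg a ha
        rw [Finset.mem_coe, hB, Finset.mem_filter, Finset.mem_Ico] at ha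
        obtain ⟨⟨h1, h2⟩, h3, h4⟩ := ha
        simp only [Nat.mul_div_cancel_left m hg1]
        rw [Finset.mem_coe, hSdef, Finset.mem_filter, Finset.mem_Ico]
        refine ⟨⟨?_, ?_⟩, ?_⟩
        · rcases Nat.eq_zero_or_pos m with h | h
          · rw [h] at h1; simp at h1
          · exact h
        · rw [hr] at h2; exact Nat.lt_of_mul_lt_mul_left h2
        · rw [Nat.gcd_comm q, h3] at h4
          convert h4 using 2
          rw [hr]; push_cast; field_simp
      · intro a ha b hb hab
        exact (Nat.div_left_inj (hBg a ha) (hBg b hb)).1 hab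
    have hBS' : (B.card : ℝ) ≤ S.card := by exact_mod_cast hBS
    refine mul_le_mul_of_nonneg_left (le_trans ?_ key) (hψ0 q)
    gcongr
  refine (Finset.sum_le_sum hinner).trans ?_
  have hsq := aux_sq q.divisors (fun g hg => Nat.pos_of_mem_divisors hg)
  have e : ∑ g ∈ q.divisors, ψ q * ((3 + 2 * D) / Q
      + (1 + 30 * D) * (5 * (Real.logb 2 g / g * L⁻¹ ^ 2) + 8 * (1 / (g:ℝ) ^ 2)))
      = ψ q * (q.divisors.card * ((3 + 2 * D) / Q)) + 5 * (1 + 30 * D) * ψ q * L⁻¹ ^ 2 *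
          (∑ r ∈ q.divisors, Real.logb 2 r / r)
        + ψ q * (8 * (1 + 30 * D) * ∑ g ∈ q.divisors, 1 / (g:ℝ)^2) := by
    rw [← Finset.mul_sum, Finset.sum_add_distrib, ← Finset.mul_sum, Finset.sum_add_distrib,
      ← Finset.mul_sum, ← Finset.mul_sum, ← Finset.sum_mul]
    simp only [Finset.sum_const, nsmul_eq_mul]
    ring
  rw [e]
  have f1 : (q.divisors.card : ℝ) * ((3 + 2 * D) / Q) ≤ 3 + 2 * D := by
    rw [← mul_div_assoc, div_le_iff₀ (by linarith)]
    nlinarith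
  have f2 : 8 * (1 + 30 * D) * ∑ g ∈ q.divisors, 1 / (g:ℝ)^2 ≤ 16 * (1 + 30 * D) := by
    nlinarith
  have g1 := mul_le_mul_of_nonneg_left f1 (hψ0 q)
  have g2 := mul_le_mul_of_nonneg_left f2 (hψ0 q)
  linarith
end

section
/- Let ε > 0 and let ψ be an approximation function with ψ(q) = O(1/q). Then the series ∑ ψ(q), taken over those integers q ≥ 3 with Ω(q) ≥ (log q)^{1/2 + ε}, converges, where Ω(q) is the number of prime factors of q counted with multiplicity. -/
open Filter

noncomputable def rk_g (s : ℝ) (hs : 1 < s) : ℕ →* ℝ where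
  toFun n := 1 / (n : ℝ) ^ s
  map_one' := by simp
  map_mul' m n := by
    push_cast
    rw [Real.mul_rpow (Nat.cast_nonneg _) (Nat.cast_nonneg _), one_div_mul_one_div]

noncomputable def rk_f (s : ℝ) (hs : 1 < s) : ℕ →* ℝ where
  toFun n := (3 / 2 : ℝ) ^ n.primeFactorsList.length * (1 / (n : ℝ) ^ s)
  map_one' := by simp
  map_mul' m n := by
    have hs0 : s ≠ 0 := by linarith
    rcases eq_or_ne m 0 with rfl | hm
    · simp [hs0]
    rcases eq_or_ne n 0 with rfl | hn
    · simp [hs0]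
    have h := ArithmeticFunction.cardFactors_mul hm hn
    simp only [ArithmeticFunction.cardFactors_apply] at h
    rw [h, pow_add]
    push_cast
    rw [Real.mul_rpow (Nat.cast_nonneg _) (Nat.cast_nonneg _), ← one_div_mul_one_div]
    ring

lemma rk_g_apply (s : ℝ) (hs : 1 < s) (n : ℕ) : rk_g s hs n = 1 / (n : ℝ) ^ s := rfl

lemma rk_f_apply (s : ℝ) (hs : 1 < s) (n : ℕ) :
    rk_f s hs n = (3 / 2 : ℝ) ^ n.primeFactorsList.length * (1 / (n : ℝ) ^ s) := rfl

lemma rk_g_prime (s : ℝ) (hs : 1 < s) {p : ℕ} (hp : p.Prime) :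
    0 ≤ rk_g s hs p ∧ rk_g s hs p ≤ 1 / 2 := by
  rw [rk_g_apply]
  have h2 : (2 : ℝ) ≤ p := by exact_mod_cast hp.two_le
  have h3 : (p : ℝ) ≤ (p : ℝ) ^ s := by
    conv_lhs => rw [← Real.rpow_one (p : ℝ)]
    exact Real.rpow_le_rpow_of_exponent_le (by linarith) hs.le
  refine ⟨by positivity, ?_⟩
  exact one_div_le_one_div_of_le (by norm_num) (h2.trans h3)

lemma rk_f_prime (s : ℝ) (hs : 1 < s) {p : ℕ} (hp : p.Prime) :
    rk_f s hs p = 3 / 2 * rk_g s hs p := by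
  rw [rk_f_apply, rk_g_apply, Nat.primeFactorsList_prime hp]
  simp

lemma rk_f_nonneg (s : ℝ) (hs : 1 < s) (n : ℕ) : 0 ≤ rk_f s hs n := by
  rw [rk_f_apply]; positivity

lemma rk_g_nonneg (s : ℝ) (hs : 1 < s) (n : ℕ) : 0 ≤ rk_g s hs n := by
  rw [rk_g_apply]; positivity

lemma rk_partial (s : ℝ) (hs : 1 < s) (N : ℕ) :
    ∑ n ∈ Finset.range N, rk_f s hs n ≤ (∑' n : ℕ, 1 / (n : ℝ) ^ s) ^ 2 := by
  have hsum : Summable (fun n : ℕ => rk_g s hs n) := Real.summable_one_div_nat_rpow.2 hs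
  obtain ⟨hf1, hf2⟩ := EulerProduct.summable_and_hasSum_smoothNumbers_prod_primesBelow_geometric
    (f := rk_f s hs) (fun {p} hp => by
      have := rk_g_prime s hs hp
      rw [rk_f_prime s hs hp, Real.norm_eq_abs, abs_lt]
      constructor <;> linarith) N
  have hg := EulerProduct.prod_primesBelow_geometric_eq_tsum_smoothNumbers (f := rk_g s hs) hsum N
  have hgle : ∑' m : N.smoothNumbers, rk_g s hs m ≤ ∑' n : ℕ, 1 / (n : ℝ) ^ s :=
    hsum.tsum_subtype_le (fun n => rk_g s hs n) _ (rk_g_nonneg s hs)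
  have hg0 : 0 ≤ ∑' m : N.smoothNumbers, rk_g s hs m := tsum_nonneg fun m => rk_g_nonneg s hs m
  have hprod : ∏ p ∈ N.primesBelow, (1 - rk_f s hs p)⁻¹
      ≤ (∏ p ∈ N.primesBelow, (1 - rk_g s hs p)⁻¹) ^ 2 := by
    rw [← Finset.prod_pow]
    apply Finset.prod_le_prod
    · intro p hp
      have hp' := Nat.prime_of_mem_primesBelow hp
      have := rk_g_prime s hs hp'
      rw [rk_f_prime s hs hp']
      apply inv_nonneg.2; linarith
    · intro p hp
      have hp' := Nat.prime_of_mem_primesBelow hp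
      have := rk_g_prime s hs hp'
      rw [rk_f_prime s hs hp', inv_pow]
      apply inv_anti₀
      · apply pow_pos; linarith
      · nlinarith
  have hle : ∑ n ∈ Finset.range N, rk_f s hs n ≤ ∑' m : N.smoothNumbers, rk_f s hs m := by
    have hS : Summable (fun n => (N.smoothNumbers).indicator (rk_f s hs) n) :=
      summable_subtype_iff_indicator.1 hf2.summable
    rw [tsum_subtype (N.smoothNumbers) (fun n => rk_f s hs n)]
    refine le_trans (Finset.sum_le_sum ?_) (hS.sum_le_tsum (Finset.range N) ?_)
    · intro n hn
      rcases Nat.eq_zero_or_pos n with rfl | h0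
      · have : rk_f s hs 0 = 0 := by
          rw [rk_f_apply]; simp [show s ≠ 0 by linarith]
        rw [this]
        exact Set.indicator_nonneg (fun n _ => rk_f_nonneg s hs n) _
      · rw [Set.indicator_of_mem (Nat.mem_smoothNumbers_of_lt h0 (Finset.mem_range.1 hn))]
    · intro n _
      exact Set.indicator_nonneg (fun n _ => rk_f_nonneg s hs n) _
  rw [hf2.tsum_eq] at hle
  calc _ ≤ _ := hle
    _ ≤ _ := hprod
    _ ≤ _ := by
      rw [hg]
      exact pow_le_pow_left₀ hg0 hgle 2

lemma rk_hs (k : ℕ) : (1 : ℝ) < 1 + 1 / ((k : ℝ) + 1) := by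
  have : (0 : ℝ) < 1 / ((k : ℝ) + 1) := by positivity
  linarith

lemma rk_zeta : ∃ M : ℝ, 0 ≤ M ∧ ∀ k : ℕ,
    (∑' n : ℕ, 1 / (n : ℝ) ^ (1 + 1 / ((k : ℝ) + 1))) ≤ M * ((k : ℝ) + 1) := by
  have h1 : Tendsto (fun k : ℕ => 1 + 1 / ((k : ℝ) + 1)) atTop (nhdsWithin 1 (Set.Ioi 1)) := by
    refine tendsto_nhdsWithin_iff.2 ⟨?_, Eventually.of_forall rk_hs⟩
    simpa using (tendsto_const_nhds (x := (1 : ℝ))).add (tendsto_one_div_add_atTop_nhds_zero_nat (𝕜 := ℝ))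
  obtain ⟨M, hM⟩ := (tendsto_sub_mul_tsum_nat_rpow.comp h1).bddAbove_range
  have hM' : ∀ k : ℕ, (∑' n : ℕ, 1 / (n : ℝ) ^ (1 + 1 / ((k : ℝ) + 1))) ≤ M * ((k : ℝ) + 1) := by
    intro k
    have := hM ⟨k, rfl⟩
    simp only [Function.comp, add_sub_cancel_left] at this
    have hk : (0 : ℝ) < (k : ℝ) + 1 := by positivity
    rw [one_div_mul_eq_div, div_le_iff₀ hk] at this
    exact this
  refine ⟨M, ?_, hM'⟩
  have h0 := hM' 0
  have : (0 : ℝ) ≤ ∑' n : ℕ, 1 / (n : ℝ) ^ (1 + 1 / (((0 : ℕ) : ℝ) + 1)) :=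
    tsum_nonneg fun n => by positivity
  simp only [Nat.cast_zero, zero_add, mul_one] at h0 this
  linarith

lemma rk_weights (a : ℝ) (ha : 0 < a) :
    Summable (fun k : ℕ => (3 / 2 : ℝ) ^ (-((k : ℝ) ^ a)) * ((k : ℝ) + 1) ^ 2) := by
  have hb : 0 < Real.log (3 / 2) := Real.log_pos (by norm_num)
  have h1 := isLittleO_exp_neg_mul_rpow_atTop hb (-4 / a)
  have ht : Tendsto (fun k : ℕ => (k : ℝ) ^ a) atTop atTop :=
    (tendsto_rpow_atTop ha).comp tendsto_natCast_atTop_atTop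
  have h2 := (h1.comp_tendsto ht).bound (show (0 : ℝ) < 1 by norm_num)
  have h3 : Summable (fun k : ℕ => 4 * (1 / (k : ℝ) ^ 2)) :=
    (Real.summable_one_div_nat_pow.2 (by norm_num)).mul_left 4
  refine summable_of_isBigO_nat h3 (Asymptotics.IsBigO.of_bound 1 ?_)
  filter_upwards [h2, eventually_ge_atTop 1] with k hk hk1
  have hk1' : (1 : ℝ) ≤ k := by exact_mod_cast hk1
  have hk0 : (0 : ℝ) < k := by linarith
  have e1 : ((k : ℝ) ^ a) ^ (-4 / a) = 1 / (k : ℝ) ^ 4 := by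
    rw [← Real.rpow_mul hk0.le, mul_div_cancel₀ _ ha.ne', Real.rpow_neg hk0.le, one_div]
    norm_cast
  simp only [Function.comp, e1] at hk
  rw [Real.norm_of_nonneg (Real.exp_nonneg _), Real.norm_of_nonneg (by positivity)] at hk
  rw [Real.norm_of_nonneg (by positivity), Real.norm_of_nonneg (by positivity),
    Real.rpow_def_of_pos (by norm_num)]
  have e2 : Real.log (3 / 2) * -((k : ℝ) ^ a) = -Real.log (3 / 2) * (k : ℝ) ^ a := by ring
  rw [e2]
  calc _ ≤ (1 * (1 / (k : ℝ) ^ 4)) * (2 * k) ^ 2 := by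
        gcongr
        linarith
    _ = _ := by field_simp; ring

lemma rk_abstract (w : ℕ → ℝ) (hw : ∀ k, 0 ≤ w k) (F : ℕ → ℕ → ℝ) (hF : ∀ k n, 0 ≤ F k n)
    (B : ℕ → ℝ) (hB : ∀ k N, ∑ n ∈ Finset.range N, F k n ≤ B k)
    (hS : Summable (fun k => w k * B k)) :
    Summable (fun x : ℕ × ℕ => w x.1 * F x.1 x.2) := by
  have h0 : 0 ≤ (fun x : ℕ × ℕ => w x.1 * F x.1 x.2) := by
    intro x; exact mul_nonneg (hw x.1) (hF x.1 x.2)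
  have hsumm : ∀ k : ℕ, Summable (F k) := fun k => summable_of_sum_range_le (hF k) (hB k)
  have h1 : ∀ k, ∑' n, w k * F k n ≤ w k * B k := by
    intro k
    rw [tsum_mul_left]
    exact mul_le_mul_of_nonneg_left (Real.tsum_le_of_sum_range_le (hF k) (hB k)) (hw k)
  have h2 : Summable fun k => ∑' n, w k * F k n :=
    Summable.of_nonneg_of_le (fun k => tsum_nonneg fun n => mul_nonneg (hw k) (hF k n)) h1 hS
  exact (summable_prod_of_nonneg h0).2 ⟨fun k => (hsumm k).mul_left (w k), h2⟩

noncomputable def rk_F (k n : ℕ) : ℝ := rk_f (1 + 1 / ((k : ℝ) + 1)) (rk_hs k) n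

lemma rk_double (a : ℝ) (ha : 0 < a) :
    Summable (fun x : ℕ × ℕ => (3 / 2 : ℝ) ^ (-((x.1 : ℝ) ^ a)) * rk_F x.1 x.2) := by
  obtain ⟨M, hM0, hM⟩ := rk_zeta
  refine rk_abstract (fun k : ℕ => (3 / 2 : ℝ) ^ (-((k : ℝ) ^ a))) (fun k => by positivity)
    rk_F (fun k n => rk_f_nonneg _ (rk_hs k) n) (fun k => M ^ 2 * ((k : ℝ) + 1) ^ 2) ?_ ?_
  · intro k N
    have h1 := rk_partial _ (rk_hs k) N
    have h2 := pow_le_pow_left₀ (tsum_nonneg fun n => by positivity) (hM k) 2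
    rw [mul_pow] at h2
    exact h1.trans h2
  · refine ((rk_weights a ha).mul_left (M ^ 2)).congr fun k => ?_
    ring

open Classical in
theorem stmt16 (ε : ℝ) (hε : 0 < ε) (ψ : ℕ → ℝ) (hψ0 : ∀ q, 0 ≤ ψ q)
    (hO : ∃ C > (0:ℝ), ∀ q : ℕ, 1 ≤ q → ψ q ≤ C / q) :
    Summable (fun q : ℕ =>
      if 3 ≤ q ∧ (Real.logb 2 q) ^ ((1:ℝ)/2 + ε) ≤ (q.primeFactorsList.length : ℝ)
      then ψ q else 0) := by
  obtain ⟨C, hC, hψ⟩ := hO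
  have ha : 0 < (1 : ℝ) / 2 + ε := by linarith
  have hinj : Function.Injective (fun q : ℕ => (Nat.log 2 q, q)) := fun x y h => (Prod.ext_iff.1 h).2
  have hS := ((rk_double _ ha).comp_injective hinj).mul_left (2 * C)
  refine Summable.of_nonneg_of_le (fun q => ?_) (fun q => ?_) hS
  · split_ifs
    · exact hψ0 q
    · exact le_rfl
  simp only [Function.comp]
  split_ifs with h
  swap
  · exact mul_nonneg (by positivity) (mul_nonneg (by positivity) (rk_f_nonneg _ (rk_hs _) _))
  obtain ⟨h3, hΩ⟩ := h
  refine (hψ q (by omega)).trans ?_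
  rw [rk_F, rk_f_apply]
  set k := Nat.log 2 q with hk
  have hq0 : (0 : ℝ) < q := by exact_mod_cast (show 0 < q by omega)
  have hlow : (k : ℝ) ≤ Real.logb 2 q := by
    rw [Real.le_logb_iff_rpow_le (by norm_num) hq0, Real.rpow_natCast]
    exact_mod_cast Nat.pow_log_le_self 2 (by omega)
  have hup : (q : ℝ) ≤ (2 : ℝ) ^ (k + 1) := by
    exact_mod_cast (Nat.lt_pow_succ_log_self (by norm_num) q).le
  have hpow : (q : ℝ) ^ (1 / ((k : ℝ) + 1)) ≤ 2 := by
    have := Real.rpow_le_rpow hq0.le hup (show 0 ≤ 1 / ((k : ℝ) + 1) by positivity)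
    refine this.trans (le_of_eq ?_)
    rw [← Real.rpow_natCast, ← Real.rpow_mul (by norm_num)]
    push_cast
    rw [mul_one_div_cancel (by positivity), Real.rpow_one]
  have hw : 1 ≤ (3 / 2 : ℝ) ^ (-((k : ℝ) ^ ((1 : ℝ) / 2 + ε))) *
      (3 / 2 : ℝ) ^ q.primeFactorsList.length := by
    rw [← Real.rpow_natCast, ← Real.rpow_add (by norm_num)]
    apply Real.one_le_rpow (by norm_num)
    have := Real.rpow_le_rpow (Nat.cast_nonneg k) hlow ha.le
    linarith
  rw [Real.rpow_add hq0, Real.rpow_one]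
  have hr : 0 < (q : ℝ) ^ (1 / ((k : ℝ) + 1)) := Real.rpow_pos_of_pos hq0 _
  have h5 : 1 / (2 * (q : ℝ)) ≤ 1 / ((q : ℝ) * (q : ℝ) ^ (1 / ((k : ℝ) + 1))) := by
    apply one_div_le_one_div_of_le (by positivity)
    nlinarith
  calc C / q = 2 * C * (1 * (1 / (2 * (q : ℝ)))) := by field_simp
    _ ≤ 2 * C * (((3 / 2 : ℝ) ^ (-((k : ℝ) ^ ((1 : ℝ) / 2 + ε))) *
      (3 / 2 : ℝ) ^ q.primeFactorsList.length) *
        (1 / ((q : ℝ) * (q : ℝ) ^ (1 / ((k : ℝ) + 1))))) := by gcongr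
    _ = _ := by ring
end

section
/- There is an absolute constant c > 0 with the following property. Let α be an irrational number, let Q ≥ 2 be an integer, and let σ ≥ 1 be a real number such that ‖hα‖ ≥ h^{−σ} for every integer 2 ≤ h ≤ Q and ‖α‖ ≥ 2^{−σ}. Then for every interval I ⊆ [0,1]: |#{1 ≤ n ≤ Q : the fractional part of nα lies in I} − Q·|I|| ≤ c·σ·Q^{σ/(1+σ)}. -/
open Filter

lemma block_aux (α : ℝ) (p : ℤ) (q : ℕ) (hq : 0 < q) (hpq : IsCoprime p (q : ℤ))
    (hd : |α - p / q| ≤ 1 / ((q : ℝ) * q)) (a b : ℝ) (hab : a ≤ b) (m : ℕ) :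
    (((Finset.Ioc m (m + q)).filter
      (fun n : ℕ => a ≤ Int.fract ((n : ℝ) * α) ∧ Int.fract ((n : ℝ) * α) ≤ b)).card : ℝ)
      ≤ q * (b - a) + 3 := by
  have hq' : (0 : ℝ) < q := by exact_mod_cast hq
  obtain ⟨δ, hδ⟩ : ∃ δ, δ = α - p / q := ⟨_, rfl⟩
  rw [← hδ] at hd
  have hqα : q * α = p + q * δ := by rw [hδ]; field_simp; ring
  set lo : ℝ := q * a - q * m * δ - 1 with hlo
  set hi : ℝ := q * b - q * m * δ + 1 with hhi
  have hcard : ((Finset.Ioc m (m + q)).filter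
      (fun n : ℕ => a ≤ Int.fract ((n : ℝ) * α) ∧ Int.fract ((n : ℝ) * α) ≤ b)).card
      ≤ (Finset.Icc ⌈lo⌉ ⌊hi⌋).card := by
    apply Finset.card_le_card_of_injOn (fun n : ℕ => (n : ℤ) * p - q * ⌊(n : ℝ) * α⌋)
    · intro n hn
      simp only [Finset.coe_filter, Finset.mem_Ioc, Set.mem_setOf_eq] at hn
      obtain ⟨⟨h1, h2⟩, h3, h4⟩ := hn
      have e : q * Int.fract ((n : ℝ) * α)
          = (((n : ℤ) * p - q * ⌊(n : ℝ) * α⌋ : ℤ) : ℝ) + q * n * δ := by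
        rw [Int.fract]; push_cast
        linear_combination n * hqα
      have h1' : (m : ℝ) ≤ n := by exact_mod_cast h1.le
      have h2' : (n : ℝ) ≤ m + q := by exact_mod_cast h2
      have hb : |q * (n - m) * δ| ≤ 1 := by
        rw [abs_mul, abs_of_nonneg (by apply mul_nonneg hq'.le; linarith)]
        calc (q : ℝ) * (n - m) * |δ| ≤ q * q * (1 / (q * q)) := by
              gcongr; linarith
          _ = 1 := by field_simp
      have hb' := abs_le.mp hb
      have e3 := mul_le_mul_of_nonneg_left h3 hq'.le
      have e4 := mul_le_mul_of_nonneg_left h4 hq'.le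
      simp only [Finset.coe_Icc, Set.mem_Icc]
      rw [Int.ceil_le, Int.le_floor]
      constructor
      · rw [hlo]; nlinarith
      · rw [hhi]; nlinarith
    · intro n hn n' hn' h
      simp only [Finset.coe_filter, Finset.mem_Ioc, Set.mem_setOf_eq] at hn hn'
      simp only at h
      have hdv : (q : ℤ) ∣ ((n : ℤ) - n') * p :=
        ⟨⌊(n : ℝ) * α⌋ - ⌊(n' : ℝ) * α⌋, by linear_combination h⟩
      have hdv2 := hpq.symm.dvd_of_dvd_mul_right hdv
      have := Int.eq_zero_of_abs_lt_dvd hdv2 (by rw [abs_lt]; omega)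
      omega
  have h2 : (((Finset.Icc ⌈lo⌉ ⌊hi⌋).card : ℕ) : ℝ) ≤ hi - lo + 1 := by
    rw [Int.card_Icc]
    have hpos : 0 ≤ hi - lo + 1 := by
      rw [hlo, hhi]; nlinarith
    have : (((⌊hi⌋ + 1 - ⌈lo⌉).toNat : ℤ) : ℝ) ≤ hi - lo + 1 := by
      rw [Int.toNat_eq_max]
      push_cast
      apply max_le _ hpos
      have := Int.floor_le hi
      have := Int.le_ceil lo
      linarith
    exact_mod_cast this
  have h3 : ((_ : ℕ) : ℝ) ≤ _ := Nat.cast_le.mpr hcard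
  calc _ ≤ _ := h3
    _ ≤ _ := h2
    _ = _ := by rw [hlo, hhi]; ring

lemma blocks_aux (α : ℝ) (p : ℤ) (q : ℕ) (hq : 0 < q) (hpq : IsCoprime p (q : ℤ))
    (hd : |α - p / q| ≤ 1 / ((q : ℝ) * q)) (a b : ℝ) (hab : a ≤ b) (M : ℕ) :
    (((Finset.Ioc 0 (M * q)).filter
      (fun n : ℕ => a ≤ Int.fract ((n : ℝ) * α) ∧ Int.fract ((n : ℝ) * α) ≤ b)).card : ℝ)
      ≤ M * (q * (b - a) + 3) := by
  induction M with
  | zero => simp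
  | succ M ih =>
    have hb := block_aux α p q hq hpq hd a b hab (M * q)
    have hu : Finset.Ioc 0 ((M + 1) * q)
        = Finset.Ioc 0 (M * q) ∪ Finset.Ioc (M * q) (M * q + q) := by
      rw [Finset.Ioc_union_Ioc_eq_Ioc (by omega) (by omega)]
      congr 1; ring
    rw [hu, Finset.filter_union]
    have := Finset.card_union_le ((Finset.Ioc 0 (M * q)).filter
      (fun n : ℕ => a ≤ Int.fract ((n : ℝ) * α) ∧ Int.fract ((n : ℝ) * α) ≤ b))
      ((Finset.Ioc (M * q) (M * q + q)).filter
      (fun n : ℕ => a ≤ Int.fract ((n : ℝ) * α) ∧ Int.fract ((n : ℝ) * α) ≤ b))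
    have h3 : ((_ : ℕ) : ℝ) ≤ _ := Nat.cast_le.mpr this
    push_cast at h3 ⊢
    linarith

lemma upper_aux (α : ℝ) (p : ℤ) (q : ℕ) (hq : 0 < q) (hpq : IsCoprime p (q : ℤ))
    (hd : |α - p / q| ≤ 1 / ((q : ℝ) * q)) (Q : ℕ) (X : ℝ) (hX : 1 ≤ X) (hqX : q ≤ X)
    (hQX : Q ≤ 2 * X * q) (a b : ℝ) (ha : 0 ≤ a) (hab : a ≤ b) (hb : b ≤ 1) :
    (((Finset.Icc 1 Q).filter
      (fun n : ℕ => a ≤ Int.fract ((n : ℝ) * α) ∧ Int.fract ((n : ℝ) * α) ≤ b)).card : ℝ)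
      ≤ Q * (b - a) + 10 * X := by
  have hq' : (0 : ℝ) < q := by exact_mod_cast hq
  have h := blocks_aux α p q hq hpq hd a b hab (Q / q + 1)
  have hsub : (Finset.Icc 1 Q).filter
      (fun n : ℕ => a ≤ Int.fract ((n : ℝ) * α) ∧ Int.fract ((n : ℝ) * α) ≤ b) ⊆
      (Finset.Ioc 0 ((Q / q + 1) * q)).filter
      (fun n : ℕ => a ≤ Int.fract ((n : ℝ) * α) ∧ Int.fract ((n : ℝ) * α) ≤ b) := by
    apply Finset.filter_subset_filter
    intro n hn
    rw [Finset.mem_Icc] at hn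
    rw [Finset.mem_Ioc]
    have := Nat.lt_mul_of_div_lt (Nat.lt_succ_self (Q / q)) hq
    have e : (Q / q).succ * q = (Q / q + 1) * q := rfl
    constructor <;> omega
  have h3 : ((_ : ℕ) : ℝ) ≤ _ := Nat.cast_le.mpr (Finset.card_le_card hsub)
  have hM : ((Q / q : ℕ) : ℝ) ≤ (Q : ℝ) / q := Nat.cast_div_le
  have hM2 : (Q : ℝ) / q ≤ 2 * X := by rw [div_le_iff₀ hq']; exact hQX
  have hM3 : (Q : ℝ) / q * q = Q := by field_simp
  have hL : 0 ≤ b - a := by linarith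
  calc _ ≤ _ := h3
    _ ≤ _ := h
    _ = ((Q / q : ℕ) : ℝ) * q * (b - a) + q * (b - a) + 3 * ((Q / q : ℕ) : ℝ) + 3 := by
      push_cast; ring
    _ ≤ (Q : ℝ) / q * q * (b - a) + X * 1 + 3 * (2 * X) + 3 * X := by
      gcongr
      · linarith
      · linarith
      · linarith
    _ = Q * (b - a) + 10 * X := by rw [hM3]; ring

open Classical in
theorem stmt17 : ∃ c > (0:ℝ), ∀ α : ℝ, Irrational α →
    ∀ Q : ℕ, 2 ≤ Q → ∀ σ : ℝ, 1 ≤ σ →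
    (∀ h : ℕ, 2 ≤ h → h ≤ Q → (h : ℝ) ^ (-σ) ≤ dnint (h * α)) →
    (2:ℝ) ^ (-σ) ≤ dnint α →
    ∀ a b : ℝ, 0 ≤ a → a ≤ b → b ≤ 1 →
    ∀ I : Set ℝ, Set.Ioo a b ⊆ I → I ⊆ Set.Icc a b →
    |(((Finset.Icc 1 Q).filter (fun n : ℕ => Int.fract ((n : ℝ) * α) ∈ I)).card : ℝ)
        - Q * (b - a)|
      ≤ c * σ * (Q : ℝ) ^ (σ / (1 + σ)) := by
  refine ⟨20, by norm_num, ?_⟩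
  intro α _ Q hQ σ hσ hh h1 a b ha hab hb I hI1 hI2
  have hQ1 : (1 : ℝ) ≤ Q := by exact_mod_cast (by omega : 1 ≤ Q)
  have hQ0 : (0 : ℝ) < Q := by linarith
  set X : ℝ := (Q : ℝ) ^ (σ / (1 + σ)) with hXdef
  set Y : ℝ := (Q : ℝ) ^ (1 / (1 + σ)) with hYdef
  have hX1 : 1 ≤ X := Real.one_le_rpow hQ1 (by positivity)
  have hY1 : 1 ≤ Y := Real.one_le_rpow hQ1 (by positivity)
  have hXY : X * Y = Q := by
    rw [hXdef, hYdef, ← Real.rpow_add hQ0]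
    have : σ / (1 + σ) + 1 / (1 + σ) = 1 := by field_simp; ring
    rw [this, Real.rpow_one]
  have hYX : Y ^ σ = X := by
    rw [hXdef, hYdef, ← Real.rpow_mul hQ0.le]
    congr 1; field_simp
  have hn0 : 0 < ⌊X⌋₊ := Nat.floor_pos.mpr hX1
  obtain ⟨r, hr1, hr2⟩ := Real.exists_rat_abs_sub_le_and_den_le α hn0
  have hq : 0 < r.den := r.den_pos
  have hq' : (0 : ℝ) < r.den := by exact_mod_cast hq
  have hqX : (r.den : ℝ) ≤ X :=
    (Nat.cast_le.mpr hr2).trans (Nat.floor_le (by linarith))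
  have hqQ : r.den ≤ Q := by
    have : (r.den : ℝ) ≤ Q := by rw [← hXY]; nlinarith
    exact_mod_cast this
  have hfl : X < (⌊X⌋₊ : ℝ) + 1 := Nat.lt_floor_add_one X
  have hrc : (r : ℝ) = (r.num : ℝ) / (r.den : ℝ) := Rat.cast_def r
  rw [hrc] at hr1
  have hd : |α - r.num / r.den| ≤ 1 / ((r.den : ℝ) * r.den) := by
    refine hr1.trans ?_
    apply one_div_le_one_div_of_le (by positivity)
    gcongr
    linarith
  have hdn : dnint (r.den * α) ≤ 1 / X := by
    have e : dnint (r.den * α) ≤ |r.den * α - r.num| := round_le _ _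
    refine e.trans ?_
    have e2 : (r.den : ℝ) * α - r.num = r.den * (α - r.num / r.den) := by field_simp
    rw [e2, abs_mul, abs_of_pos hq']
    calc (r.den : ℝ) * |α - r.num / r.den|
        ≤ r.den * (1 / ((⌊X⌋₊ + 1) * r.den)) := by gcongr
      _ = 1 / (⌊X⌋₊ + 1) := by field_simp
      _ ≤ 1 / X := by
        apply one_div_le_one_div_of_le (by linarith) hfl.le
  have key : ∀ t : ℝ, 0 < t → t ^ (-σ) ≤ 1 / X → Y ≤ t := by
    intro t ht h
    rw [Real.rpow_neg ht.le, ← one_div] at h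
    have h' : X ≤ t ^ σ := (one_div_le_one_div (by positivity) (by linarith)).mp h
    rw [← hYX] at h'
    exact (Real.rpow_le_rpow_iff (by linarith) ht.le (by linarith)).mp h'
  have hY2 : Y ≤ 2 * r.den := by
    rcases Nat.lt_or_ge r.den 2 with h | h
    · have e : r.den = 1 := by omega
      rw [e] at hdn ⊢
      simp only [Nat.cast_one, one_mul, mul_one] at hdn ⊢
      exact key 2 (by norm_num) (h1.trans hdn)
    · have := key r.den hq' ((hh _ h hqQ).trans hdn)
      linarith
  have hQX : (Q : ℝ) ≤ 2 * X * r.den := by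
    rw [← hXY]; nlinarith
  have hcop : IsCoprime r.num (r.den : ℤ) := by
    rw [Int.isCoprime_iff_gcd_eq_one]
    exact r.reduced
  have U := upper_aux α r.num r.den hq hcop hd Q X hX1 hqX hQX
  have U1 := U a b ha hab hb
  have U2 := U 0 a le_rfl ha (hab.trans hb)
  have U3 := U b 1 (ha.trans hab) hb le_rfl
  have c1 : (((Finset.Icc 1 Q).filter (fun n : ℕ => Int.fract ((n : ℝ) * α) ∈ I)).card : ℝ)
      ≤ Q * (b - a) + 10 * X := by
    refine le_trans ?_ U1
    apply Nat.cast_le.mpr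
    apply Finset.card_le_card
    intro n hn
    simp only [Finset.mem_filter] at hn ⊢
    exact ⟨hn.1, hI2 hn.2⟩
  have c2 : Q ≤ ((Finset.Icc 1 Q).filter (fun n : ℕ => Int.fract ((n : ℝ) * α) ∈ I)).card
      + (((Finset.Icc 1 Q).filter
      (fun n : ℕ => 0 ≤ Int.fract ((n : ℝ) * α) ∧ Int.fract ((n : ℝ) * α) ≤ a)).card
      + ((Finset.Icc 1 Q).filter
      (fun n : ℕ => b ≤ Int.fract ((n : ℝ) * α) ∧ Int.fract ((n : ℝ) * α) ≤ 1)).card) := by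
    refine le_trans ?_ (Nat.add_le_add_left (Finset.card_union_le _ _) _)
    refine le_trans ?_ (Finset.card_union_le _ _)
    have : Q = (Finset.Icc 1 Q).card := by simp
    conv_lhs => rw [this]
    apply Finset.card_le_card
    intro n hn
    simp only [Finset.mem_union, Finset.mem_filter, hn, true_and]
    have f0 := Int.fract_nonneg ((n : ℝ) * α)
    have f1 := (Int.fract_lt_one ((n : ℝ) * α)).le
    rcases le_or_gt (Int.fract ((n : ℝ) * α)) a with h | h
    · exact Or.inr (Or.inl ⟨f0, h⟩)
    · rcases le_or_gt b (Int.fract ((n : ℝ) * α)) with h' | h'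
      · exact Or.inr (Or.inr ⟨h', f1⟩)
      · exact Or.inl (hI1 ⟨h, h'⟩)
  have c3 : ((_ : ℕ) : ℝ) ≤ _ := Nat.cast_le.mpr c2
  push_cast at c3
  have hfin : 20 * X ≤ 20 * σ * X := by nlinarith
  refine le_trans ?_ hfin
  rw [abs_le]
  constructor
  · have : (Q : ℝ) ≤ ((Finset.Icc 1 Q).filter
        (fun n : ℕ => Int.fract ((n : ℝ) * α) ∈ I)).card
        + ((Q * (a - 0) + 10 * X) + (Q * (1 - b) + 10 * X)) := by
      refine c3.trans ?_
      gcongr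
    linarith
  · linarith
end
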